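/- arXiv:1103.0203 — 4 statements merged into one kernel-verified Lean document; each statement's English description precedes it below -/
import Mathlib

section
/- Let n ≥ 2, m ≥ 1, V = ℂ^{n+1}. For a general symmetric m-multilinear map M : V^m → Λ^{n−1}V (i.e., off the zero set of some nonzero polynomial in the coefficients of M), the set of eigenvector lines {[v] ∈ P^n : v ≠ 0 and M(v,…,v) ∧ v = 0 in Λ^nV} is finite of cardinality exactly ((m+1)^{n+1} + (−1)^n)/(m+2). -/
open MvPolynomial ExteriorAlgebra

/-- The basis wedge `e_S = e_{j_1} ∧ ⋯ ∧ e_{j_b}` (indices of `S` in increasing order),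
as an element of the exterior algebra of `ℂ^k`. -/
noncomputable def eWedge (k : ℕ) (S : Finset (Fin k)) : ExteriorAlgebra ℂ (Fin k → ℂ) :=
  ((S.sort (· ≤ ·)).map fun j => ExteriorAlgebra.ι ℂ (Pi.single j (1:ℂ))).prod

/-- The value `M(v^m) ∈ Λ^b ℂ^k` of the tensor `M ∈ Hom(S^m ℂ^k, Λ^b ℂ^k)` represented by
the family of polynomials `q = (q_S)_{|S| = b}`, namely `Σ_S q_S(v) · e_S`. -/
noncomputable def tval (k b : ℕ)
    (q : {S : Finset (Fin k) // S.card = b} → MvPolynomial (Fin k) ℂ)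
    (v : Fin k → ℂ) : ExteriorAlgebra ℂ (Fin k → ℂ) :=
  ∑ S : {S : Finset (Fin k) // S.card = b}, MvPolynomial.eval v (q S) • eWedge k S.1

section LocalConstancy

open Filter Topology

/-- The zeros of `f` in the affine chart `v 0 = 1`. -/
def affineZeros {n : ℕ} (f : (Fin (n + 1) → ℂ) → Fin (n + 1) → ℂ) : Set (Fin (n + 1) → ℂ) :=
  {v | v 0 = 1 ∧ f v = 0}

section
variable {n : ℕ} {F : ℂ → (Fin (n + 1) → ℂ) → Fin (n + 1) → ℂ} {t₀ : ℂ}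

theorem exists_local_branch (hF : ContDiff ℂ 1 (Function.uncurry F))
    (hE : ∀ t v, ∑ i, v i * F t v i = 0) {v₁ : Fin (n + 1) → ℂ}
    (hv : v₁ ∈ affineZeros (F t₀))
    (hnd : ∀ w, w 0 = 0 → fderiv ℂ (F t₀) v₁ w = 0 → w = 0) :
    ∃ φ : ℂ → Fin (n + 1) → ℂ, Tendsto φ (𝓝 t₀) (𝓝 v₁) ∧
      ∀ᶠ z : ℂ × (Fin (n + 1) → ℂ) in 𝓝 (t₀, v₁), z.2 ∈ affineZeros (F z.1) ↔ φ z.1 = z.2 := by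
  obtain ⟨hv0, hv1⟩ := hv
  let G : ℂ × (Fin (n + 1) → ℂ) → Fin (n + 1) → ℂ :=
    fun z => Function.uncurry F z + (z.2 0 - 1) • (Pi.single 0 (1 : ℂ) : Fin (n + 1) → ℂ)
  have hG : ContDiff ℂ 1 G := by
    have h : ContDiff ℂ 1 fun z : ℂ × (Fin (n + 1) → ℂ) =>
        (z.2 0 - 1) • (Pi.single 0 (1 : ℂ) : Fin (n + 1) → ℂ) := by fun_prop
    exact hF.add h
  have hGz : ∀ z : ℂ × (Fin (n + 1) → ℂ), z.2 0 ≠ 0 → (G z = 0 ↔ z.2 ∈ affineZeros (F z.1)) := by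
    rintro ⟨t, v⟩ h0
    constructor
    · intro h
      have h1 : ∑ i, v i * G (t, v) i = 0 := by simp [h]
      have h2 : ∑ i, v i * G (t, v) i = v 0 * (v 0 - 1) := by
        simp only [G, Pi.add_apply, mul_add, Finset.sum_add_distrib, Function.uncurry, hE, zero_add]
        rw [Finset.sum_eq_single 0] <;> simp +contextual
      have h3 : v 0 = 1 := by
        rw [h1] at h2
        rcases mul_eq_zero.1 h2.symm with h | h
        · exact absurd h h0
        · exact sub_eq_zero.1 h
      refine ⟨h3, ?_⟩
      simpa [G, h3] using h
    · rintro ⟨h, h'⟩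
      simp only at h h'
      simp [G, h, h']
  have hstrict : HasStrictFDerivAt G (fderiv ℂ G (t₀, v₁)) (t₀, v₁) :=
    hG.contDiffAt.hasStrictFDerivAt one_ne_zero
  have hFd : DifferentiableAt ℂ (F t₀) v₁ := by
    have : Differentiable ℂ (Function.uncurry F) := hF.differentiable one_ne_zero
    exact (this (t₀, v₁)).comp v₁ (hasFDerivAt_prodMk_right (𝕜 := ℂ) t₀ v₁).differentiableAt
  have hpart : ∀ w, fderiv ℂ G (t₀, v₁) (0, w) =
      fderiv ℂ (F t₀) v₁ w + w 0 • (Pi.single 0 (1 : ℂ) : Fin (n + 1) → ℂ) := by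
    intro w
    have h1 : HasFDerivAt (fun v => G (t₀, v))
        ((fderiv ℂ G (t₀, v₁)).comp (ContinuousLinearMap.inr ℂ ℂ _)) v₁ :=
      hstrict.hasFDerivAt.comp v₁ (hasFDerivAt_prodMk_right t₀ v₁)
    have h2 := hFd.hasFDerivAt.add
      ((((ContinuousLinearMap.proj (R := ℂ) (φ := fun _ : Fin (n + 1) => ℂ) 0).hasFDerivAt
        (x := v₁)).sub_const 1).smul_const (Pi.single 0 (1 : ℂ) : Fin (n + 1) → ℂ))
    have := congrArg (fun L => L w) (h1.unique h2)
    simpa using this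
  have hinv : ((fderiv ℂ G (t₀, v₁)).comp (.inr ℂ ℂ (Fin (n + 1) → ℂ))).IsInvertible := by
    set A := (fderiv ℂ G (t₀, v₁)).comp (.inr ℂ ℂ (Fin (n + 1) → ℂ))
    have hFE : ∀ w, ∑ i, v₁ i * fderiv ℂ (F t₀) v₁ w i = 0 := by
      intro w
      have hc : ∀ i, HasFDerivAt (fun v : Fin (n + 1) → ℂ => v i * F t₀ v i)
          (v₁ i • ((ContinuousLinearMap.proj (R := ℂ) i).comp (fderiv ℂ (F t₀) v₁)) +
            F t₀ v₁ i • ContinuousLinearMap.proj (R := ℂ) i) v₁ := by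
        intro i
        exact (hasFDerivAt_apply (𝕜 := ℂ) i v₁).mul ((hasFDerivAt_pi' (𝕜 := ℂ)).1 hFd.hasFDerivAt i)
      have h1 := HasFDerivAt.fun_sum (u := Finset.univ) fun i _ => hc i
      have h2 : HasFDerivAt (𝕜 := ℂ) (fun v : Fin (n + 1) → ℂ => ∑ i, v i * F t₀ v i) 0 v₁ := by
        simp only [hE]
        exact hasFDerivAt_const _ _
      have := congrArg (fun L => L w) (h1.unique h2)
      simpa [hv1] using this
    have hinj : Function.Injective A := by
      rw [injective_iff_map_eq_zero]
      intro w hw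
      have hw' : fderiv ℂ (F t₀) v₁ w + w 0 • (Pi.single 0 (1 : ℂ) : Fin (n + 1) → ℂ) = 0 := by
        rw [← hpart]; exact hw
      have hw0 : w 0 = 0 := by
        have h1 : ∑ i, v₁ i * (fderiv ℂ (F t₀) v₁ w +
            w 0 • (Pi.single 0 (1 : ℂ) : Fin (n + 1) → ℂ)) i = 0 := by
          rw [hw']; simp
        simp only [Pi.add_apply, mul_add, Finset.sum_add_distrib, hFE, zero_add] at h1
        rw [Finset.sum_eq_single 0] at h1
        · simpa [hv0] using h1
        · simp +contextual
        · simp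
      refine hnd w hw0 ?_
      simpa [hw0] using hw'
    refine ⟨(LinearEquiv.ofInjectiveEndo A.toLinearMap hinj).toContinuousLinearEquiv, ?_⟩
    ext; rfl
  refine ⟨hstrict.implicitFunctionOfProdDomain hinv,
    hstrict.tendsto_implicitFunctionOfProdDomain hinv, ?_⟩
  have hG0 : G (t₀, v₁) = 0 := (hGz (t₀, v₁) (by simp [hv0])).2 ⟨hv0, hv1⟩
  have hne : ∀ᶠ z : ℂ × (Fin (n + 1) → ℂ) in 𝓝 (t₀, v₁), z.2 0 ≠ 0 :=
    ContinuousAt.eventually_ne (by fun_prop) (by simp [hv0])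
  filter_upwards [hne, hstrict.eventually_apply_eq_iff_implicitFunctionOfProdDomain hinv]
    with z hz1 hz2
  rw [← hz2, hG0, hGz z hz1]

theorem eventually_affineZeros_bounded {d : ℕ} (hF : Continuous (Function.uncurry F))
    (hhom : ∀ t (c : ℂ) v, F t (c • v) = c ^ d • F t v)
    (hgood : ∀ v, v ≠ 0 → F t₀ v = 0 → v 0 ≠ 0) :
    ∃ C : ℝ, ∀ᶠ t in 𝓝 t₀, ∀ v ∈ affineZeros (F t), ‖v‖ ≤ C := by
  have key : ∀ᶠ x : ℂ × ℝ in 𝓝 (t₀, 0), ∀ v ∈ Metric.sphere (0 : Fin (n + 1) → ℂ) 1,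
      x.2 < ‖v 0‖ ∨ F x.1 v ≠ 0 := by
    refine (isCompact_sphere _ _).eventually_forall_of_forall_eventually (P := fun (x : ℂ × ℝ) v =>
      x.2 < ‖v 0‖ ∨ F x.1 v ≠ 0) fun v hv => ?_
    have hv0 : v ≠ 0 := by
      rintro rfl
      simp at hv
    by_cases h : F t₀ v = 0
    · have : ∀ᶠ z : (ℂ × ℝ) × (Fin (n + 1) → ℂ) in 𝓝 ((t₀, 0), v), z.1.2 < ‖z.2 0‖ :=
        ContinuousAt.eventually_lt (by fun_prop) (by fun_prop) (by simpa using hgood v hv0 h)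
      exact this.mono fun z hz => Or.inl hz
    · have : ∀ᶠ z : (ℂ × ℝ) × (Fin (n + 1) → ℂ) in 𝓝 ((t₀, 0), v),
          Function.uncurry F (z.1.1, z.2) ≠ 0 :=
        ContinuousAt.eventually_ne (by fun_prop) h
      exact this.mono fun z hz => Or.inr hz
  obtain ⟨ε, hε, hε0⟩ : ∃ ε : ℝ, (∀ᶠ t in 𝓝 t₀, ∀ v ∈ Metric.sphere (0 : Fin (n + 1) → ℂ) 1,
      ε < ‖v 0‖ ∨ F t v ≠ 0) ∧ 0 < ε := by
    rw [nhds_prod_eq] at key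
    obtain ⟨p, hp, r, hr, h⟩ := eventually_prod_iff.1 key
    obtain ⟨ε, hε, hε0⟩ := ((hr.filter_mono nhdsWithin_le_nhds).and
      (self_mem_nhdsWithin (a := (0 : ℝ)) (s := Set.Ioi 0))).exists
    exact ⟨ε, hp.mono fun t ht => h ht hε, hε0⟩
  refine ⟨ε⁻¹, hε.mono fun t ht v hv => ?_⟩
  have hv0 : v ≠ 0 := by
    rintro rfl
    simpa using hv.1
  have hn : 0 < ‖v‖ := norm_pos_iff.2 hv0
  rcases ht (((‖v‖⁻¹ : ℝ) : ℂ) • v) (by simp [norm_smul, hn.ne']) with h | h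
  · simp only [Pi.smul_apply, hv.1, smul_eq_mul, mul_one, Complex.norm_real, norm_inv,
      norm_norm] at h
    exact (le_inv_comm₀ hε0 hn).1 h.le
  · exact absurd (by rw [hhom, hv.2, smul_zero]) h

theorem eventually_ncard_affineZeros_eq {d : ℕ} (hF : ContDiff ℂ 1 (Function.uncurry F))
    (hE : ∀ t v, ∑ i, v i * F t v i = 0)
    (hhom : ∀ t (c : ℂ) v, F t (c • v) = c ^ d • F t v)
    (hgood : ∀ v, v ≠ 0 → F t₀ v = 0 → v 0 ≠ 0)
    (hnd : ∀ v ∈ affineZeros (F t₀), ∀ w, w 0 = 0 → fderiv ℂ (F t₀) v w = 0 → w = 0) :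
    ∀ᶠ t in 𝓝 t₀, (affineZeros (F t)).ncard = (affineZeros (F t₀)).ncard := by
  have hFc := hF.continuous
  choose! φ hφ hφz using fun v (hv : v ∈ affineZeros (F t₀)) =>
    exists_local_branch hF hE hv (hnd v hv)
  obtain ⟨C, hC⟩ := eventually_affineZeros_bounded hFc hhom hgood
  have hnear : ∀ y, ∀ᶠ z : ℂ × (Fin (n + 1) → ℂ) in 𝓝 (t₀, y), z.2 ∈ affineZeros (F z.1) →
      y ∈ affineZeros (F t₀) ∧ φ y z.1 = z.2 := by
    intro y
    by_cases hy : y ∈ affineZeros (F t₀)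
    · exact (hφz y hy).mono fun z hz h => ⟨hy, hz.1 h⟩
    · have : IsClosed {z : ℂ × (Fin (n + 1) → ℂ) | z.2 ∈ affineZeros (F z.1)} :=
        (isClosed_eq (by fun_prop) continuous_const).inter (isClosed_eq hFc continuous_const)
      filter_upwards [this.isOpen_compl.mem_nhds (x := (t₀, y)) hy] with z hz h using absurd h hz
  have hfin : (affineZeros (F t₀)).Finite := by
    have hsub : affineZeros (F t₀) ⊆ Metric.closedBall 0 C := fun v hv => by
      simpa using hC.self_of_nhds v hv
    have hcl : ∀ y, ∀ᶠ v in 𝓝 y, v ∈ affineZeros (F t₀) → v = y := by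
      intro y
      have h1 : Tendsto (fun v : Fin (n + 1) → ℂ => (t₀, v)) (𝓝 y) (𝓝 (t₀, y)) :=
        (Continuous.prodMk_right t₀).tendsto y
      filter_upwards [h1.eventually (hnear y)] with v hv h
      obtain ⟨hy, h2⟩ := hv h
      have h3 := (hφz y hy).self_of_nhds.1 hy
      exact h2.symm.trans h3
    by_contra hinf
    obtain ⟨y, -, hy⟩ := (Set.not_finite.1 hinf : (affineZeros (F t₀)).Infinite).exists_accPt_of_subset_isCompact
      (isCompact_closedBall 0 C) hsub
    rw [accPt_iff_frequently] at hy
    exact hy ((hcl y).mono fun v hv h => h.1 (hv h.2))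
  have hcover : ∀ᶠ t in 𝓝 t₀, ∀ v ∈ Metric.closedBall (0 : Fin (n + 1) → ℂ) C,
      v ∈ affineZeros (F t) → ∃ y ∈ affineZeros (F t₀), φ y t = v :=
    (isCompact_closedBall 0 C).eventually_forall_of_forall_eventually (P := fun t v =>
      v ∈ affineZeros (F t) → ∃ y ∈ affineZeros (F t₀), φ y t = v)
      fun y _ => (hnear y).mono fun z hz h => ⟨y, hz h⟩
  have hmaps : ∀ᶠ t in 𝓝 t₀, ∀ y ∈ affineZeros (F t₀), φ y t ∈ affineZeros (F t) := by
    rw [hfin.eventually_all]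
    intro y hy
    have h1 : Tendsto (fun t => (t, φ y t)) (𝓝 t₀) (𝓝 (t₀, y)) := by
      rw [nhds_prod_eq]
      exact tendsto_id.prodMk (hφ y hy)
    exact (h1.eventually (hφz y hy)).mono fun t ht => ht.2 rfl
  have hinj : ∀ᶠ t in 𝓝 t₀, ∀ y ∈ affineZeros (F t₀), ∀ y' ∈ affineZeros (F t₀),
      φ y t = φ y' t → y = y' := by
    rw [hfin.eventually_all]
    intro y hy
    rw [hfin.eventually_all]
    intro y' hy'
    by_cases h : y = y'
    · exact Eventually.of_forall fun _ _ => h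
    · have hne := ((hφ y hy).prodMk_nhds (hφ y' hy')).eventually
        (isClosed_diagonal.isOpen_compl.mem_nhds h)
      exact hne.mono fun t ht h' => absurd h' ht
  filter_upwards [hC, hcover, hmaps, hinj] with t h1 h2 h3 h4
  have : affineZeros (F t) = (fun y => φ y t) '' affineZeros (F t₀) := by
    ext v
    constructor
    · intro hv
      exact h2 v (by simpa using h1 v hv) hv
    · rintro ⟨y, hy, rfl⟩
      exact h3 y hy
  rw [this, Set.InjOn.ncard_image fun y hy y' hy' => h4 y hy y' hy']

end

end LocalConstancy

section PolynomialMaps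

variable {n : ℕ}

/-- The polynomial map with components `p`. -/
noncomputable def polyMap (p : Fin (n + 1) → MvPolynomial (Fin (n + 1)) ℂ)
    (v : Fin (n + 1) → ℂ) (i : Fin (n + 1)) : ℂ :=
  eval v (p i)

/-- The Jacobian matrix of `p`, with `X 0 ^ m` added to the top left entry. -/
noncomputable def chartJacobian {R : Type*} [CommRing R] (m : ℕ)
    (p : Fin (n + 1) → MvPolynomial (Fin (n + 1)) R) :
    Matrix (Fin (n + 1)) (Fin (n + 1)) (MvPolynomial (Fin (n + 1)) R) :=
  Matrix.of fun i j => pderiv j (p i) + if i = 0 ∧ j = 0 then X 0 ^ m else 0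

/-- Every projective zero of `p` lies in the chart `v 0 ≠ 0` and is nondegenerate there. -/
def HasSimpleZeros (m : ℕ) (p : Fin (n + 1) → MvPolynomial (Fin (n + 1)) ℂ) : Prop :=
  ∀ v, polyMap p v = 0 → eval v (chartJacobian m p).det = 0 → v = 0

theorem exists_hasFDerivAt_eval (q : MvPolynomial (Fin (n + 1)) ℂ) (v : Fin (n + 1) → ℂ) :
    ∃ L : (Fin (n + 1) → ℂ) →L[ℂ] ℂ, HasFDerivAt (fun v => eval v q) L v ∧
      ∀ w, L w = ∑ j, eval v (pderiv j q) * w j := by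
  induction q using MvPolynomial.induction_on with
  | C a => exact ⟨0, by simpa using hasFDerivAt_const (𝕜 := ℂ) a v, by simp⟩
  | add p q hp hq =>
    obtain ⟨L, hL, hLw⟩ := hp
    obtain ⟨L', hL', hLw'⟩ := hq
    refine ⟨L + L', ?_, fun w => ?_⟩
    · simp only [map_add]
      exact hL.add hL'
    · simp [hLw, hLw', add_mul, Finset.sum_add_distrib]
  | mul_X p i hp =>
    obtain ⟨L, hL, hLw⟩ := hp
    have hX := hL.mul (hasFDerivAt_apply (𝕜 := ℂ) i v)
    refine ⟨_, by simpa only [map_mul, eval_X] using! hX, ?_⟩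
    · intro w
      have h : ∀ j, eval v (pderiv j (p * X i)) * w j =
          v i * (eval v (pderiv j p) * w j) + if i = j then eval v p * w i else 0 := by
        intro j
        rw [pderiv_mul]
        by_cases hij : i = j
        · subst hij
          simp
          ring
        · simp [pderiv_X_of_ne hij, hij]
          ring
      simp only [h, Finset.sum_add_distrib, ← Finset.mul_sum, ← hLw]
      simp
      ring

theorem fderiv_polyMap_apply (p : Fin (n + 1) → MvPolynomial (Fin (n + 1)) ℂ)
    (v w : Fin (n + 1) → ℂ) (i : Fin (n + 1)) :
    fderiv ℂ (polyMap p) v w i = ∑ j, eval v (pderiv j (p i)) * w j := by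
  choose L hL hLw using fun i => exists_hasFDerivAt_eval (p i) v
  have h : HasFDerivAt (polyMap p) (ContinuousLinearMap.pi L) v := hasFDerivAt_pi.2 hL
  rw [h.fderiv, ← hLw]
  rfl

theorem contDiff_eval (q : MvPolynomial (Fin (n + 1)) ℂ) :
    ContDiff ℂ 1 (fun v : Fin (n + 1) → ℂ => eval v q) := by
  simp only [eval_eq']
  fun_prop

theorem polyMap_smul {p : Fin (n + 1) → MvPolynomial (Fin (n + 1)) ℂ} {d : ℕ}
    (hp : ∀ i, (p i).IsHomogeneous d) (c : ℂ) (v : Fin (n + 1) → ℂ) :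
    polyMap p (c • v) = c ^ d • polyMap p v := by
  ext i
  simp only [polyMap, eval_eq', Pi.smul_apply, smul_eq_mul, mul_pow, Finset.prod_mul_distrib,
    Finset.prod_pow_eq_pow_sum, Finset.mul_sum]
  refine Finset.sum_congr rfl fun μ hμ => ?_
  have : ∑ j, μ j = d := by
    rw [← Finsupp.degree_eq_sum]
    by_contra h
    exact mem_support_iff.1 hμ ((hp i).coeff_eq_zero h)
  rw [this]
  ring

theorem eval_chartJacobian_mulVec (m : ℕ) (p : Fin (n + 1) → MvPolynomial (Fin (n + 1)) ℂ)
    (v w : Fin (n + 1) → ℂ) :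
    ((chartJacobian m p).map (eval v)).mulVec w =
      fderiv ℂ (polyMap p) v w + Pi.single 0 (v 0 ^ m * w 0) := by
  ext i
  rw [Pi.add_apply, fderiv_polyMap_apply]
  simp only [Matrix.mulVec, dotProduct, chartJacobian, Matrix.map_apply, Matrix.of_apply, map_add,
    add_mul, Finset.sum_add_distrib]
  congr 1
  rw [Finset.sum_eq_single 0]
  · by_cases hi : i = 0 <;> simp [hi]
  · intro j _ hj
    simp [hj]
  · simp

theorem HasSimpleZeros.eq_zero_of_mulVec {m : ℕ}
    {p : Fin (n + 1) → MvPolynomial (Fin (n + 1)) ℂ} (h : HasSimpleZeros m p)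
    {v w : Fin (n + 1) → ℂ} (hv : v ≠ 0) (hpv : polyMap p v = 0) (hw : w 0 = 0)
    (hd : fderiv ℂ (polyMap p) v w = 0) : w = 0 := by
  refine Matrix.eq_zero_of_mulVec_eq_zero (M := (chartJacobian m p).map (eval v)) ?_ ?_
  · intro hdet
    refine hv (h v hpv ?_)
    rw [RingHom.map_det]
    exact hdet
  · rw [eval_chartJacobian_mulVec, hd, hw]
    simp

theorem fderiv_polyMap_self {p : Fin (n + 1) → MvPolynomial (Fin (n + 1)) ℂ} {d : ℕ}
    (hp : ∀ i, (p i).IsHomogeneous d) (v : Fin (n + 1) → ℂ) :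
    fderiv ℂ (polyMap p) v v = (d : ℂ) • polyMap p v := by
  ext i
  rw [fderiv_polyMap_apply]
  have := congrArg (eval v) (hp i).sum_X_mul_pderiv
  simpa [polyMap, mul_comm] using this

theorem HasSimpleZeros.apply_zero_ne_zero {m d : ℕ}
    {p : Fin (n + 1) → MvPolynomial (Fin (n + 1)) ℂ} (h : HasSimpleZeros m p)
    (hp : ∀ i, (p i).IsHomogeneous d) {v : Fin (n + 1) → ℂ} (hv : v ≠ 0)
    (hpv : polyMap p v = 0) : v 0 ≠ 0 := fun h0 =>
  hv (h.eq_zero_of_mulVec hv hpv h0 (by rw [fderiv_polyMap_self hp, hpv, smul_zero]))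

theorem ncard_affineZeros_eq_of_hasSimpleZeros {m d : ℕ}
    {p₀ p₁ : Fin (n + 1) → MvPolynomial (Fin (n + 1)) ℂ}
    (h₀ : ∀ i, (p₀ i).IsHomogeneous d) (h₁ : ∀ i, (p₁ i).IsHomogeneous d)
    (hE₀ : ∀ v, ∑ i, v i * polyMap p₀ v i = 0) (hE₁ : ∀ v, ∑ i, v i * polyMap p₁ v i = 0)
    {s : Set ℂ} (hs : s.Finite) (h0 : 0 ∉ s) (h1 : 1 ∉ s)
    (hsimple : ∀ t ∉ s, HasSimpleZeros m fun i => C (1 - t) * p₀ i + C t * p₁ i) :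
    (affineZeros (polyMap p₁)).ncard = (affineZeros (polyMap p₀)).ncard := by
  let P : ℂ → Fin (n + 1) → MvPolynomial (Fin (n + 1)) ℂ :=
    fun t i => C (1 - t) * p₀ i + C t * p₁ i
  have hP : ∀ t i, (P t i).IsHomogeneous d := fun t i => ((h₀ i).C_mul _).add ((h₁ i).C_mul _)
  have hPe : ∀ t v i, polyMap (P t) v i = (1 - t) * polyMap p₀ v i + t * polyMap p₁ v i := by
    intro t v i
    simp [P, polyMap]
  have hcd : ContDiff ℂ 1 (Function.uncurry fun t => polyMap (P t)) := by
    rw [contDiff_pi]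
    intro i
    have e₀ := (contDiff_eval (p₀ i)).comp (contDiff_snd (𝕜 := ℂ) (E := ℂ))
    have e₁ := (contDiff_eval (p₁ i)).comp (contDiff_snd (𝕜 := ℂ) (E := ℂ))
    have : ContDiff ℂ 1 fun z : ℂ × (Fin (n + 1) → ℂ) =>
        (1 - z.1) * eval z.2 (p₀ i) + z.1 * eval z.2 (p₁ i) :=
      ((contDiff_const.sub contDiff_fst).mul e₀).add (contDiff_fst.mul e₁)
    convert this using 2 with z
    exact hPe z.1 z.2 i
  have hE : ∀ t v, ∑ i, v i * polyMap (P t) v i = 0 := by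
    intro t v
    have : ∑ i, v i * polyMap (P t) v i =
        (1 - t) * ∑ i, v i * polyMap p₀ v i + t * ∑ i, v i * polyMap p₁ v i := by
      rw [Finset.mul_sum, Finset.mul_sum, ← Finset.sum_add_distrib]
      refine Finset.sum_congr rfl fun i _ => ?_
      rw [hPe]
      ring
    rw [this, hE₀, hE₁]
    simp
  have hloc : ∀ t ∉ s, ∀ᶠ t' in nhds t,
      (affineZeros (polyMap (P t'))).ncard = (affineZeros (polyMap (P t))).ncard := by
    intro t ht
    refine eventually_ncard_affineZeros_eq (d := d) hcd hE (fun t => polyMap_smul (hP t))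
      (fun v hv hpv => (hsimple t ht).apply_zero_ne_zero (hP t) hv hpv) ?_
    rintro v ⟨hv0, hpv⟩ w hw hd
    refine (hsimple t ht).eq_zero_of_mulVec ?_ hpv hw hd
    rintro rfl
    simp at hv0
  have hconn : IsPreconnected sᶜ :=
    (hs.countable.isConnected_compl_of_one_lt_rank (by simp)).isPreconnected
  have hcont : ContinuousOn (fun t => (affineZeros (polyMap (P t))).ncard) sᶜ := by
    intro t ht
    refine ContinuousAt.continuousWithinAt ?_
    rw [ContinuousAt, nhds_discrete ℕ, Filter.tendsto_pure]
    exact hloc t ht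
  have := hconn.constant hcont h1 h0
  simpa [P] using this

end PolynomialMaps

section CyclicExample

open scoped Fin.CommRing

/-- The integers `(1 - (-d) ^ k) / (1 + d)`. -/
def cyclicExponent (d : ℕ) : ℕ → ℤ
  | 0 => 0
  | k + 1 => 1 - d * cyclicExponent d k

theorem cyclicExponent_mul (d k : ℕ) : (d + 1) * cyclicExponent d k = 1 - (-d) ^ k := by
  induction k with
  | zero => simp [cyclicExponent]
  | succ k ih =>
    rw [cyclicExponent, pow_succ]
    linear_combination (-(d : ℤ)) * ih

theorem natAbs_cyclicExponent (n m : ℕ) :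
    (cyclicExponent (m + 1) (n + 1)).natAbs =
      if Even n then ((m + 1) ^ (n + 1) + 1) / (m + 2) else ((m + 1) ^ (n + 1) - 1) / (m + 2) := by
  have h := cyclicExponent_mul (m + 1) (n + 1)
  have hpos : 1 ≤ (m + 1) ^ (n + 1) := Nat.one_le_pow _ _ (by omega)
  have key := congrArg Int.natAbs h
  rw [Int.natAbs_mul, show ((m + 1 : ℕ) + 1 : ℤ).natAbs = m + 2 by omega] at key
  split_ifs with hn
  · symm
    apply Nat.div_eq_of_eq_mul_right (by omega)
    rw [key, (Even.add_one hn).neg_pow]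
    have : (1 - -((m + 1 : ℕ) : ℤ) ^ (n + 1)) = (((m + 1) ^ (n + 1) + 1 : ℕ) : ℤ) := by
      push_cast; ring
    rw [this, Int.natAbs_natCast]
  · symm
    apply Nat.div_eq_of_eq_mul_right (by omega)
    rw [key, (Odd.add_one (Nat.not_even_iff_odd.1 hn)).neg_pow]
    have : (1 - ((m + 1 : ℕ) : ℤ) ^ (n + 1)) = -(((m + 1) ^ (n + 1) - 1 : ℕ) : ℤ) := by
      push_cast [hpos]; ring
    rw [this, Int.natAbs_neg, Int.natAbs_natCast]

theorem cyclicExponent_ne_zero {n m : ℕ} (hn : 1 ≤ n) (hm : 1 ≤ m) :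
    cyclicExponent (m + 1) (n + 1) ≠ 0 := by
  intro h0
  have h := cyclicExponent_mul (m + 1) (n + 1)
  rw [h0, mul_zero] at h
  have h1 : ((-((m + 1 : ℕ) : ℤ)) ^ (n + 1)).natAbs = 1 := by
    rw [show (-((m + 1 : ℕ) : ℤ)) ^ (n + 1) = 1 by linarith]
    rfl
  rw [Int.natAbs_pow, Int.natAbs_neg, Int.natAbs_natCast] at h1
  have : 1 < (m + 1) ^ (n + 1) := Nat.one_lt_pow (by omega) (by omega)
  omega

variable {n : ℕ}

theorem Fin.forall_of_add_one {P : Fin (n + 1) → Prop} (h : ∀ i, P i → P (i + 1))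
    {i : Fin (n + 1)} (hi : P i) (j : Fin (n + 1)) : P j := by
  have hk : ∀ k : ℕ, P (i + (k : Fin (n + 1))) := by
    intro k
    induction k with
    | zero => simpa using hi
    | succ k ih =>
      have := h _ ih
      rwa [add_assoc, ← Nat.cast_add_one] at this
  have := hk (j - i).val
  simpa using this

theorem Fin.apply_natCast_eq_mul_cyclicExponent {d : ℕ} {u : Fin (n + 1) → ℂ} {s : ℂ}
    (h0 : u 0 = 0) (hu : ∀ i, u (i + 1) = s - d * u i) (k : ℕ) :
    u (k : Fin (n + 1)) = s * cyclicExponent d k := by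
  induction k with
  | zero => simpa [cyclicExponent] using h0
  | succ k ih =>
    rw [Nat.cast_add_one, hu, ih, cyclicExponent]
    push_cast
    ring

theorem Fin.apply_natCast_eq_zpow_cyclicExponent {d : ℕ} {v : Fin (n + 1) → ℂ} {c : ℂ}
    (hc : c ≠ 0) (h0 : v 0 = 1) (hv : ∀ i, v i ^ d * v (i + 1) = c) (k : ℕ) :
    v (k : Fin (n + 1)) = c ^ cyclicExponent d k := by
  induction k with
  | zero => simpa [cyclicExponent] using h0
  | succ k ih =>
    have h := hv k
    rw [ih, ← zpow_natCast, ← zpow_mul] at h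
    rw [Nat.cast_add_one, cyclicExponent, zpow_sub₀ hc, zpow_one, eq_div_iff (zpow_ne_zero _ hc),
      mul_comm, mul_comm (d : ℤ)]
    exact h

/-- The components `x_i ^ m * x_{i+1} - x_{i-1} ^ (m + 1)`, with cyclic indices. -/
noncomputable def cyclicPoly (n m : ℕ) (i : Fin (n + 1)) : MvPolynomial (Fin (n + 1)) ℂ :=
  X i ^ m * X (i + 1) - X (i - 1) ^ (m + 1)

theorem polyMap_cyclicPoly (m : ℕ) (v : Fin (n + 1) → ℂ) (i : Fin (n + 1)) :
    polyMap (cyclicPoly n m) v i = v i ^ m * v (i + 1) - v (i - 1) ^ (m + 1) := by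
  simp [polyMap, cyclicPoly]

theorem cyclicPoly_zero_ne_zero {m : ℕ} (hm : 1 ≤ m) {v : Fin (n + 1) → ℂ} (hv : v ≠ 0)
    (hz : polyMap (cyclicPoly n m) v = 0) (i : Fin (n + 1)) : v i ≠ 0 := by
  by_contra hi
  refine hv (funext fun j => ?_)
  have key : ∀ k, v (-k) = 0 → v (-(k + 1)) = 0 := by
    intro k hk
    have := congrFun hz (-k)
    rw [polyMap_cyclicPoly, hk, zero_pow (by omega)] at this
    rw [neg_add, ← sub_eq_add_neg]
    simpa using this
  have := Fin.forall_of_add_one (P := fun k => v (-k) = 0) key (i := -i) (by simpa using hi) (-j)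
  simpa using this

theorem cyclicPoly_zero_const {m : ℕ} {v : Fin (n + 1) → ℂ}
    (hz : polyMap (cyclicPoly n m) v = 0) (i : Fin (n + 1)) :
    v i ^ (m + 1) * v (i + 1) = v 0 ^ (m + 1) * v 1 := by
  refine Fin.forall_of_add_one (P := fun i => v i ^ (m + 1) * v (i + 1) = v 0 ^ (m + 1) * v 1)
    (fun i hi => ?_) (i := 0) (by simp) i
  have h := congrFun hz (i + 1)
  rw [polyMap_cyclicPoly, add_sub_cancel_right, Pi.zero_apply] at h
  rw [← hi]
  linear_combination v (i + 1) * h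

theorem fderiv_cyclicPoly (m : ℕ) (v w : Fin (n + 1) → ℂ) (i : Fin (n + 1)) :
    fderiv ℂ (polyMap (cyclicPoly n m)) v w i =
      m * v i ^ (m - 1) * w i * v (i + 1) + v i ^ m * w (i + 1) -
        (m + 1) * v (i - 1) ^ m * w (i - 1) := by
  classical
  rw [fderiv_polyMap_apply]
  have h : ∀ j, eval v (pderiv j (cyclicPoly n m i)) * w j =
      (if i = j then m * v i ^ (m - 1) * w j * v (i + 1) else 0) +
      (if i + 1 = j then v i ^ m * w j else 0) -
      (if i - 1 = j then (m + 1) * v (i - 1) ^ m * w j else 0) := by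
    intro j
    simp only [cyclicPoly, map_sub, pderiv_mul, pderiv_pow, pderiv_X, Pi.single_apply, map_add,
      map_mul, map_pow, eval_X, map_natCast, apply_ite (eval v), map_one,
      map_zero]
    split_ifs <;> simp <;> ring
  simp only [h, Finset.sum_sub_distrib, Finset.sum_add_distrib, Finset.sum_ite_eq,
    Finset.mem_univ, if_true]

theorem hasSimpleZeros_cyclicPoly {m : ℕ} (hn : 1 ≤ n) (hm : 1 ≤ m) :
    HasSimpleZeros m (cyclicPoly n m) := by
  intro v hz hdet
  by_contra hv
  have hne := cyclicPoly_zero_ne_zero hm hv hz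
  rw [RingHom.map_det] at hdet
  obtain ⟨w, hw, hMw⟩ := Matrix.exists_mulVec_eq_zero_iff.2 hdet
  rw [RingHom.mapMatrix_apply, eval_chartJacobian_mulVec] at hMw
  obtain ⟨m, rfl⟩ : ∃ k, m = k + 1 := ⟨m - 1, by omega⟩
  set g : Fin (n + 1) → ℂ := fun i =>
    (m + 2) * v i ^ (m + 1) * w i * v (i + 1) + v i ^ (m + 2) * w (i + 1) with hg
  have hstep : ∀ i, g i - g (i - 1) + v i * (Pi.single 0 (v 0 ^ (m + 1) * w 0) : Fin (n + 1) → ℂ) i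
      = 0 := by
    intro i
    have h1 := congrFun hMw i
    have h2 := congrFun hz i
    rw [Pi.add_apply, fderiv_cyclicPoly] at h1
    rw [polyMap_cyclicPoly] at h2
    simp only [hg, sub_add_cancel, Pi.zero_apply, add_tsub_cancel_right, Nat.cast_add,
      Nat.cast_one] at h1 h2 ⊢
    linear_combination v i * h1 + w i * h2
  have hw0 : w 0 = 0 := by
    have hsum := Finset.sum_congr (s₁ := Finset.univ) rfl fun i _ => hstep i
    have hshift : ∑ i, g (i - 1) = ∑ i, g i := Equiv.sum_comp (Equiv.subRight (1 : Fin (n + 1))) g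
    rw [Finset.sum_add_distrib, Finset.sum_sub_distrib, hshift, sub_self, zero_add,
      Finset.sum_eq_single 0 (by simp +contextual) (by simp)] at hsum
    simpa [hne 0] using hsum
  have hconst : ∀ i, g i = g 0 := fun i => by
    refine Fin.forall_of_add_one (P := fun i => g i = g 0) (fun i hi => ?_) (i := 0) rfl i
    have := hstep (i + 1)
    simp only [hw0, mul_zero, Pi.single_zero, Pi.zero_apply, add_zero, add_sub_cancel_right] at this
    rw [← hi, ← sub_eq_zero, this]
  set c := v 0 ^ (m + 2) * v 1 with hc
  have hc0 : c ≠ 0 := mul_ne_zero (pow_ne_zero _ (hne 0)) (hne 1)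
  have hcv : ∀ i, v i ^ (m + 2) * v (i + 1) = c := cyclicPoly_zero_const hz
  set u : Fin (n + 1) → ℂ := fun i => w i / v i with hu
  have hrec : ∀ i, u (i + 1) = g 0 / c - ((m + 2 : ℕ) : ℂ) * u i := by
    intro i
    have h1 := hne i
    have h2 := hne (i + 1)
    rw [← hconst i, ← hcv i]
    simp only [hg, hu]
    push_cast
    field_simp
    ring
  have hval := Fin.apply_natCast_eq_mul_cyclicExponent (u := u) (by simp [hu, hw0]) hrec
  have hs : g 0 / c = 0 := by
    have h1 := hval (n + 1)
    rw [Fin.natCast_self] at h1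
    have h2 : u 0 = 0 := by simp [hu, hw0]
    rw [h2] at h1
    rcases mul_eq_zero.1 h1.symm with h | h
    · exact h
    · exact absurd (by exact_mod_cast h) (cyclicExponent_ne_zero (m := m + 1) hn (by omega))
  refine hw (funext fun i => ?_)
  have h1 := hval i.val
  rw [hs, zero_mul, Fin.cast_val_eq_self] at h1
  simpa [hu, hne i] using h1

theorem ncard_affineZeros_cyclicPoly {m : ℕ} (hn : 1 ≤ n) (hm : 1 ≤ m) :
    (affineZeros (polyMap (cyclicPoly n m))).ncard =
      (cyclicExponent (m + 1) (n + 1)).natAbs := by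
  set N := (cyclicExponent (m + 1) (n + 1)).natAbs with hN
  have hN0 : N ≠ 0 := Int.natAbs_ne_zero.2 (cyclicExponent_ne_zero hn hm)
  have hroot : ∀ c : ℂ, c ^ N = 1 ↔ c ^ cyclicExponent (m + 1) (n + 1) = 1 := by
    intro c
    rcases Int.natAbs_eq (cyclicExponent (m + 1) (n + 1)) with h | h
    · rw [h, zpow_natCast]
    · rw [h, zpow_neg, zpow_natCast, inv_eq_one]
  have h1val : ((1 : Fin (n + 1)) : ℕ) = 1 := by
    simp only [Fin.coe_ofNat_eq_mod]
    exact Nat.mod_eq_of_lt (by omega)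
  have himage : affineZeros (polyMap (cyclicPoly n m)) =
      (fun (c : ℂ) (i : Fin (n + 1)) => c ^ cyclicExponent (m + 1) i.val) ''
        (Polynomial.nthRootsFinset N (1 : ℂ) : Set ℂ) := by
    ext v
    simp only [Set.mem_image, Finset.mem_coe, Polynomial.mem_nthRootsFinset (Nat.pos_of_ne_zero hN0)]
    constructor
    · rintro ⟨hv0, hz⟩
      have hv : v ≠ 0 := by
        rintro rfl
        simp at hv0
      have hne := cyclicPoly_zero_ne_zero hm hv hz
      have hcv : ∀ i, v i ^ (m + 1) * v (i + 1) = v 1 := fun i => by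
        rw [cyclicPoly_zero_const hz, hv0, one_pow, one_mul]
      have hval := Fin.apply_natCast_eq_zpow_cyclicExponent (hne 1) hv0 hcv
      refine ⟨v 1, ?_, funext fun i => ?_⟩
      · rw [hroot, ← hval, Fin.natCast_self, hv0]
      · rw [← hval, Fin.cast_val_eq_self]
    · rintro ⟨c, hc, rfl⟩
      have hc0 : c ≠ 0 := by
        rintro rfl
        simp [hN0] at hc
      rw [hroot] at hc
      have hsucc : ∀ i : Fin (n + 1), c ^ cyclicExponent (m + 1) (i + 1).val =
          c ^ cyclicExponent (m + 1) (i.val + 1) := by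
        intro i
        rw [Fin.val_add_one]
        split_ifs with hi
        · rw [hi, Fin.val_last, hc, cyclicExponent, zpow_zero]
        · rfl
      have hcv : ∀ i : Fin (n + 1), (c ^ cyclicExponent (m + 1) i.val) ^ (m + 1) *
          c ^ cyclicExponent (m + 1) (i + 1).val = c := by
        intro i
        rw [hsucc, ← zpow_natCast, ← zpow_mul, ← zpow_add₀ hc0, cyclicExponent]
        ring_nf
        simp
      refine ⟨by simp [cyclicExponent], funext fun i => ?_⟩
      rw [polyMap_cyclicPoly, Pi.zero_apply]
      have h1 := hcv i
      have h2 := hcv (i - 1)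
      rw [sub_add_cancel] at h2
      have h3 : c ^ cyclicExponent (m + 1) i.val ≠ 0 := zpow_ne_zero _ hc0
      refine (mul_eq_zero.1 ?_).resolve_left h3
      linear_combination h1 - h2
  rw [himage, Set.InjOn.ncard_image, Set.ncard_coe_finset,
    (Complex.isPrimitiveRoot_exp N hN0).card_nthRootsFinset]
  intro c _ c' _ h
  have := congrFun h 1
  simp only [h1val] at this
  simpa [cyclicExponent] using this

end CyclicExample

section ExteriorAlgebra

/-- The product in the exterior algebra of the standard basis vectors indexed by a list. -/
noncomputable def basisProd {k : ℕ} (l : List (Fin k)) : ExteriorAlgebra ℂ (Fin k → ℂ) :=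
  (l.map fun j => ExteriorAlgebra.ι ℂ (Pi.single j (1 : ℂ))).prod

theorem eWedge_eq_basisProd {k : ℕ} (S : Finset (Fin k)) :
    eWedge k S = basisProd (S.sort (· ≤ ·)) := rfl

theorem basisProd_append_singleton {k : ℕ} (l : List (Fin k)) (j : Fin k) :
    basisProd (l ++ [j]) = basisProd l * ExteriorAlgebra.ι ℂ (Pi.single j (1 : ℂ)) := by
  simp [basisProd]

theorem basisProd_eq_ιMulti {k : ℕ} (l : List (Fin k)) :
    basisProd l = ExteriorAlgebra.ιMulti ℂ l.length fun i => Pi.single (l.get i) (1 : ℂ) := by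
  rw [ExteriorAlgebra.ιMulti_apply, basisProd]
  congr 1
  conv_lhs => rw [← List.ofFn_get l, List.map_ofFn]
  rfl

theorem basisProd_eq_zero {k : ℕ} {l : List (Fin k)} (h : ¬l.Nodup) : basisProd l = 0 := by
  rw [basisProd_eq_ιMulti]
  refine AlternatingMap.map_eq_zero_of_not_injective _ _ fun hinj => h ?_
  rw [List.nodup_iff_injective_get]
  exact fun a b hab => hinj (by simp only [hab])

theorem ExteriorAlgebra.ι_mul_ι_swap {V : Type*} [AddCommGroup V] [Module ℂ V] (x y : V) :
    ExteriorAlgebra.ι ℂ x * ExteriorAlgebra.ι ℂ y =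
      -(ExteriorAlgebra.ι ℂ y * ExteriorAlgebra.ι ℂ x) :=
  eq_neg_of_add_eq_zero_left (ExteriorAlgebra.ι_add_mul_swap x y)

theorem basisProd_perm {k : ℕ} {l l' : List (Fin k)} (h : l.Perm l') :
    basisProd l = basisProd l' ∨ basisProd l = -basisProd l' := by
  induction h with
  | nil => exact Or.inl rfl
  | cons x _ ih =>
    simp only [basisProd, List.map_cons, List.prod_cons] at ih ⊢
    rcases ih with h | h <;> rw [h] <;> simp
  | swap x y l =>
    right
    simp only [basisProd, List.map_cons, List.prod_cons, ← mul_assoc]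
    rw [ExteriorAlgebra.ι_mul_ι_swap, neg_mul]
  | trans _ _ h₁ h₂ =>
    rcases h₁ with h₁ | h₁ <;> rcases h₂ with h₂ | h₂ <;> rw [h₁, h₂] <;> simp

variable {n : ℕ}

/-- The linear form on the exterior algebra given by the determinant in top degree. -/
noncomputable def topForm (n : ℕ) : ExteriorAlgebra ℂ (Fin (n + 1) → ℂ) →ₗ[ℂ] ℂ :=
  ExteriorAlgebra.liftAlternating (Pi.single (n + 1) Matrix.detRowAlternating)

theorem topForm_basisProd_finRange : topForm n (basisProd (List.finRange (n + 1))) = 1 := by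
  rw [basisProd, ← List.ofFn_eq_map, ← ExteriorAlgebra.ιMulti_apply (R := ℂ), topForm,
    ExteriorAlgebra.liftAlternating_apply_ιMulti, Pi.single_eq_same]
  have h : (Matrix.of fun i => Pi.single i 1 : Matrix (Fin (n + 1)) (Fin (n + 1)) ℂ) = 1 := by
    ext i j
    simp [Matrix.one_apply, Pi.single_apply, eq_comm]
  change Matrix.det (Matrix.of fun i => Pi.single i 1) = 1
  rw [h, Matrix.det_one]

theorem topForm_basisProd_mul_self {l : List (Fin (n + 1))} (h : l.Nodup)
    (hl : l.length = n + 1) : topForm n (basisProd l) * topForm n (basisProd l) = 1 := by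
  have hmem : ∀ a, a ∈ l := by
    have : l.toFinset = Finset.univ := by
      rw [← Finset.card_eq_iff_eq_univ, List.toFinset_card_of_nodup h, hl, Fintype.card_fin]
    intro a
    rw [← List.mem_toFinset, this]
    exact Finset.mem_univ a
  have hp : l.Perm (List.finRange (n + 1)) :=
    (List.perm_ext_iff_of_nodup h (List.nodup_finRange _)).2 (by simp [hmem])
  rcases basisProd_perm hp with h | h <;> rw [h] <;> simp [topForm_basisProd_finRange]

/-- The coefficient of the volume form in `e_S ∧ e_j ∧ e_i`. -/
noncomputable def wedgeCoeff (S : Finset (Fin (n + 1))) (j i : Fin (n + 1)) : ℂ :=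
  topForm n (eWedge (n + 1) S * ExteriorAlgebra.ι ℂ (Pi.single j (1 : ℂ)) *
    ExteriorAlgebra.ι ℂ (Pi.single i (1 : ℂ)))

theorem wedgeCoeff_swap (S : Finset (Fin (n + 1))) (j i : Fin (n + 1)) :
    wedgeCoeff S i j = -wedgeCoeff S j i := by
  rw [wedgeCoeff, wedgeCoeff, mul_assoc, ExteriorAlgebra.ι_mul_ι_swap, mul_neg, map_neg, mul_assoc]

theorem wedgeCoeff_eq (S : Finset (Fin (n + 1))) (j i : Fin (n + 1)) :
    wedgeCoeff S j i = topForm n (basisProd (S.sort (· ≤ ·) ++ [j] ++ [i])) := by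
  rw [basisProd_append_singleton, basisProd_append_singleton, wedgeCoeff, eWedge_eq_basisProd]

theorem nodup_sort_append_iff {S : Finset (Fin (n + 1))} {j i : Fin (n + 1)} :
    (S.sort (· ≤ ·) ++ [j] ++ [i]).Nodup ↔ j ∉ S ∧ i ∉ S ∧ i ≠ j := by
  simp [List.nodup_append, Finset.sort_nodup]
  grind

theorem wedgeCoeff_mul_self {S : Finset (Fin (n + 1))} (hS : S.card + 1 = n) {j i : Fin (n + 1)}
    (hj : j ∉ S) (hi : i ∉ S) (hij : i ≠ j) : wedgeCoeff S j i * wedgeCoeff S j i = 1 := by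
  rw [wedgeCoeff_eq]
  exact topForm_basisProd_mul_self (nodup_sort_append_iff.2 ⟨hj, hi, hij⟩) (by simp [hS])

theorem wedgeCoeff_eq_zero {S : Finset (Fin (n + 1))} {j i : Fin (n + 1)}
    (h : j ∈ S ∨ i ∈ S ∨ i = j) : wedgeCoeff S j i = 0 := by
  rw [wedgeCoeff_eq, basisProd_eq_zero, map_zero]
  rw [nodup_sort_append_iff]
  tauto

theorem eWedge_mul_ι_mem_span {S : Finset (Fin (n + 1))} (hS : S.card + 1 = n) (j : Fin (n + 1)) :
    eWedge (n + 1) S * ExteriorAlgebra.ι ℂ (Pi.single j (1 : ℂ)) ∈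
      Submodule.span ℂ (Set.range fun k => eWedge (n + 1) {k}ᶜ) := by
  rw [eWedge_eq_basisProd, ← basisProd_append_singleton]
  by_cases hj : j ∈ S
  · rw [basisProd_eq_zero]
    · exact Submodule.zero_mem _
    · simp [List.nodup_append, hj]
  · have hcard : (insert j S)ᶜ.card = 1 := by
      rw [Finset.card_compl, Finset.card_insert_of_notMem hj, Fintype.card_fin]
      omega
    obtain ⟨k, hk⟩ := Finset.card_eq_one.1 hcard
    have hk' : ({k} : Finset (Fin (n + 1)))ᶜ = insert j S := by rw [← hk, compl_compl]
    have hp : (S.sort (· ≤ ·) ++ [j]).Perm ((({k} : Finset (Fin (n + 1)))ᶜ).sort (· ≤ ·)) := by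
      refine (List.perm_ext_iff_of_nodup ?_ (Finset.sort_nodup _ _)).2 fun a => ?_
      · simp [List.nodup_append, Finset.sort_nodup]
        grind
      · rw [hk']
        simp [or_comm]
    have hmem : eWedge (n + 1) {k}ᶜ ∈
        Submodule.span ℂ (Set.range fun k => eWedge (n + 1) ({k}ᶜ : Finset (Fin (n + 1)))) :=
      Submodule.subset_span ⟨k, rfl⟩
    rcases basisProd_perm hp with h | h <;> rw [h]
    · exact hmem
    · exact Submodule.neg_mem _ hmem

theorem eq_zero_of_mem_span_of_topForm {ω : ExteriorAlgebra ℂ (Fin (n + 1) → ℂ)}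
    (hω : ω ∈ Submodule.span ℂ (Set.range fun k => eWedge (n + 1) {k}ᶜ))
    (h : ∀ i, topForm n (ω * ExteriorAlgebra.ι ℂ (Pi.single i (1 : ℂ))) = 0) : ω = 0 := by
  obtain ⟨c, rfl⟩ := (Submodule.mem_span_range_iff_exists_fun ℂ).1 hω
  refine Finset.sum_eq_zero fun k _ => ?_
  have hk := h k
  have hzero : ∀ j ≠ k, topForm n (c j • eWedge (n + 1) {j}ᶜ *
      ExteriorAlgebra.ι ℂ (Pi.single k (1 : ℂ))) = 0 := by
    intro j hj
    rw [eWedge_eq_basisProd, smul_mul_assoc, ← basisProd_append_singleton, basisProd_eq_zero,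
      smul_zero, map_zero]
    simp [List.nodup_append, hj.symm]
  rw [Finset.sum_mul, map_sum, Finset.sum_eq_single k (fun j _ hj => hzero j hj) (by simp),
    eWedge_eq_basisProd, smul_mul_assoc, ← basisProd_append_singleton, map_smul,
    smul_eq_mul] at hk
  have hone := topForm_basisProd_mul_self
    (l := (({k} : Finset (Fin (n + 1)))ᶜ).sort (· ≤ ·) ++ [k])
    (by simp [List.nodup_append, Finset.sort_nodup]) (by simp [Finset.card_compl])
  rcases mul_eq_zero.1 hk with h | h
  · rw [h, zero_smul]
  · rw [h] at hone
    simp at hone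

theorem ι_eq_sum (v : Fin (n + 1) → ℂ) :
    ExteriorAlgebra.ι ℂ v = ∑ j, v j • ExteriorAlgebra.ι ℂ (Pi.single j (1 : ℂ)) := by
  conv_lhs => rw [pi_eq_sum_univ' v]
  simp [map_sum]

theorem tval_mul_ι_eq_zero_iff {b : ℕ} (hb : b + 1 = n)
    (q : {S : Finset (Fin (n + 1)) // S.card = b} → MvPolynomial (Fin (n + 1)) ℂ)
    (v : Fin (n + 1) → ℂ) :
    tval (n + 1) b q v * ExteriorAlgebra.ι ℂ v = 0 ↔
      ∀ i, topForm n (tval (n + 1) b q v * ExteriorAlgebra.ι ℂ v *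
        ExteriorAlgebra.ι ℂ (Pi.single i (1 : ℂ))) = 0 := by
  refine ⟨fun h i => by rw [h, zero_mul, map_zero], eq_zero_of_mem_span_of_topForm ?_⟩
  rw [ι_eq_sum, tval, Finset.sum_mul_sum]
  refine Submodule.sum_mem _ fun S _ => Submodule.sum_mem _ fun j _ => ?_
  rw [smul_mul_smul_comm]
  exact Submodule.smul_mem _ _ (eWedge_mul_ι_mem_span (by rw [S.2, hb]) j)

end ExteriorAlgebra

theorem exists_elimination_poly {σ ι κ : Type*} [Finite ι] [Fintype κ]
    (P : κ → MvPolynomial ι (MvPolynomial σ ℂ)) (d : κ → ℕ)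
    (hP : ∀ k, (P k).IsHomogeneous (d k)) (c₀ : σ → ℂ)
    (h₀ : ∀ v : ι → ℂ, (∀ k, eval v (map (eval c₀) (P k)) = 0) → v = 0) :
    ∃ D : MvPolynomial σ ℂ, eval c₀ D ≠ 0 ∧ ∀ c, eval c D ≠ 0 →
      ∀ v : ι → ℂ, (∀ k, eval v (map (eval c) (P k)) = 0) → v = 0 := by
  classical
  let := MvPolynomial.gradedAlgebra (σ := ι) (R := ℂ)
  have := Fintype.ofFinite ι
  set I : Ideal (MvPolynomial ι ℂ) := Ideal.span (Set.range fun k => map (eval c₀) (P k)) with hI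
  have hX : ∀ i, ∃ N, (X i : MvPolynomial ι ℂ) ^ N ∈ I := by
    intro i
    have : (X i : MvPolynomial ι ℂ) ∈ vanishingIdeal ℂ (zeroLocus ℂ I) := by
      intro v hv
      have : v = 0 := h₀ v fun k => by
        simpa using hv _ (Ideal.subset_span (Set.mem_range_self k))
      simp [this]
    rwa [vanishingIdeal_zeroLocus_eq_radical] at this
  choose N hN using hX
  set M : ℕ := ∑ i, N i + 1 with hM
  have hmon : ∀ μ : ι →₀ ℕ, μ.degree = M → monomial μ (1 : ℂ) ∈ I := by
    intro μ hμ
    obtain ⟨i, hi⟩ : ∃ i, N i ≤ μ i := by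
      by_contra! hlt
      have : μ.degree ≤ ∑ i, N i := by
        rw [Finsupp.degree_eq_sum]
        exact Finset.sum_le_sum fun i _ => (hlt i).le
      omega
    have : monomial μ (1 : ℂ) = monomial (μ - Finsupp.single i (N i)) 1 * X i ^ N i := by
      rw [X_pow_eq_monomial, monomial_mul, one_mul,
        tsub_add_cancel_of_le (Finsupp.single_le_iff.2 hi)]
    rw [this]
    exact Ideal.mul_mem_left _ _ (hN i)
  let T := {μ : ι →₀ ℕ // μ.degree = M}
  have : Finite T := by
    have := Finsupp.finite_of_degree_le (σ := ι) M
    exact (this.subset fun μ hμ => le_of_eq hμ).to_subtype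
  have := Fintype.ofFinite T
  have hex : ∀ μ : T, ∃ h : κ → MvPolynomial ι ℂ,
      ∑ k, h k * map (eval c₀) (P k) = monomial μ.1 (1 : ℂ) := fun μ => by
    have := hmon μ.1 μ.2
    rw [hI, Ideal.mem_span_range_iff_exists_fun] at this
    exact this
  choose h hh using hex
  let R : T → MvPolynomial ι (MvPolynomial σ ℂ) := fun μ => ∑ k, map C (h μ k) * P k
  have hR : ∀ (c : σ → ℂ) μ, map (eval c) (R μ) = ∑ k, h μ k * map (eval c) (P k) := by
    intro c μ
    simp only [R, map_sum, map_mul, MvPolynomial.map_map]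
    refine Finset.sum_congr rfl fun k _ => ?_
    have : (eval c).comp (C : ℂ →+* MvPolynomial σ ℂ) = RingHom.id ℂ := by ext; simp
    rw [this, MvPolynomial.map_id]
  let Q : Matrix T T (MvPolynomial σ ℂ) := fun μ ν => coeff ν.1 (R μ)
  have hQ : ∀ c : σ → ℂ, eval c Q.det =
      (Matrix.of fun μ ν : T => coeff ν.1 (∑ k, h μ k * map (eval c) (P k))).det := by
    intro c
    rw [RingHom.map_det]
    congr 1
    ext μ ν
    rw [Matrix.of_apply, ← hR, coeff_map]
    rfl
  refine ⟨Q.det, ?_, ?_⟩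
  · rw [hQ]
    have : (Matrix.of fun μ ν : T => coeff ν.1 (∑ k, h μ k * map (eval c₀) (P k))) = 1 := by
      ext μ ν
      rw [Matrix.of_apply, hh, coeff_monomial, Matrix.one_apply]
      exact if_congr Subtype.ext_iff.symm rfl rfl
    simp [this]
  · intro c hc v hv
    rw [hQ] at hc
    have hker : (Matrix.of fun μ ν : T => coeff ν.1 (∑ k, h μ k * map (eval c) (P k))).mulVec
        (fun ν => ∏ i, v i ^ ν.1 i) = 0 := by
      ext μ
      let J : Ideal (MvPolynomial ι ℂ) := Ideal.span (Set.range fun k => map (eval c) (P k))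
      have hJ : J.IsHomogeneous (homogeneousSubmodule ι ℂ) := by
        apply Ideal.homogeneous_span (homogeneousSubmodule ι ℂ)
        rintro _ ⟨k, rfl⟩
        exact ⟨d k, (hP k).map _⟩
      have hmem : ∑ k, h μ k * map (eval c) (P k) ∈ J :=
        Ideal.sum_mem _ fun k _ => Ideal.mul_mem_left _ _ (Ideal.subset_span ⟨k, rfl⟩)
      have h1 : homogeneousComponent M (∑ k, h μ k * map (eval c) (P k)) ∈ J :=
        homogeneousComponent_mem_of_mem hJ hmem M
      have hJv : J ≤ RingHom.ker (eval v) := by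
        rw [Ideal.span_le]
        rintro _ ⟨k, rfl⟩
        exact hv k
      have h2 : eval v (homogeneousComponent M (∑ k, h μ k * map (eval c) (P k))) = 0 := hJv h1
      simp only [Matrix.mulVec, dotProduct, Matrix.of_apply, Pi.zero_apply]
      generalize ∑ k, h μ k * map (eval c) (P k) = p at h2 ⊢
      rw [eval_eq'] at h2
      rw [← h2]
      have hs : (homogeneousComponent M p).support ⊆ Finset.univ.map (Function.Embedding.subtype
          fun μ : ι →₀ ℕ => μ.degree = M) := by
        intro ν hν
        simp only [Finset.mem_map, Finset.mem_univ, true_and]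
        rw [mem_support_iff, coeff_homogeneousComponent] at hν
        exact ⟨⟨ν, by by_contra hne; simp [hne] at hν⟩, rfl⟩
      rw [Finset.sum_subset hs (fun ν _ hν => by rw [notMem_support_iff.1 hν, zero_mul]),
        Finset.sum_map]
      refine Finset.sum_congr rfl fun ν _ => ?_
      simp [coeff_homogeneousComponent, ν.2]
    have hz := Matrix.eq_zero_of_mulVec_eq_zero hc hker
    ext i
    have := congrFun hz ⟨Finsupp.single i M, by simp⟩
    simp only [Pi.zero_apply] at this
    rw [Finset.prod_eq_single i (by intro j _ hj; simp [Finsupp.single_eq_of_ne hj]) (by simp)] at this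
    simpa [hM] using this

section GenericTensor

theorem MvPolynomial.IsHomogeneous.pderiv_of_succ {τ R : Type*} [CommSemiring R]
    {p : MvPolynomial τ R} {d : ℕ} (hp : p.IsHomogeneous (d + 1)) (i : τ) :
    (pderiv i p).IsHomogeneous d := by
  classical
  rw [p.as_sum, map_sum]
  refine IsHomogeneous.sum _ _ _ fun μ hμ => ?_
  rw [pderiv_monomial]
  by_cases hi : μ i = 0
  · rw [hi, Nat.cast_zero, mul_zero, map_zero]
    exact isHomogeneous_zero _ _ _
  · refine isHomogeneous_monomial _ ?_
    have hdeg : μ.degree = d + 1 := by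
      by_contra h
      exact mem_support_iff.1 hμ (hp.coeff_eq_zero h)
    have hle : Finsupp.single i 1 ≤ μ := by
      rw [Finsupp.single_le_iff]
      omega
    have := congrArg Finsupp.degree (tsub_add_cancel_of_le hle)
    rw [map_add, Finsupp.degree_single, hdeg] at this
    omega

theorem Matrix.isHomogeneous_det {κ τ R : Type*} [Fintype κ] [DecidableEq κ] [CommRing R]
    {M : Matrix κ κ (MvPolynomial τ R)} {d : ℕ} (hM : ∀ i j, (M i j).IsHomogeneous d) :
    M.det.IsHomogeneous (Fintype.card κ * d) := by
  rw [Matrix.det_apply']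
  refine IsHomogeneous.sum _ _ _ fun s _ => ?_
  have hprod : (∏ i, M (s i) i).IsHomogeneous (∑ _ : κ, d) :=
    IsHomogeneous.prod _ _ _ fun i _ => hM _ _
  rw [Finset.sum_const, smul_eq_mul, Finset.card_univ] at hprod
  rcases Int.units_eq_one_or (Equiv.Perm.sign s) with h | h
  · simpa [h] using hprod
  · simpa [h] using hprod.neg

variable {n : ℕ}

theorem isHomogeneous_det_chartJacobian {R : Type*} [CommRing R] {m : ℕ}
    {p : Fin (n + 1) → MvPolynomial (Fin (n + 1)) R} (hp : ∀ i, (p i).IsHomogeneous (m + 1)) :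
    (chartJacobian m p).det.IsHomogeneous (Fintype.card (Fin (n + 1)) * m) := by
  refine Matrix.isHomogeneous_det fun i j => ?_
  rw [chartJacobian, Matrix.of_apply]
  refine ((hp i).pderiv_of_succ j).add ?_
  split_ifs
  · exact isHomogeneous_X_pow _ _
  · exact isHomogeneous_zero _ _ _

theorem map_det_chartJacobian {R S : Type*} [CommRing R] [CommRing S] (f : R →+* S) (m : ℕ)
    (p : Fin (n + 1) → MvPolynomial (Fin (n + 1)) R) :
    MvPolynomial.map f (chartJacobian m p).det =
      (chartJacobian m fun i => MvPolynomial.map f (p i)).det := by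
  rw [RingHom.map_det]
  congr 1
  ext1 i j
  simp only [RingHom.mapMatrix_apply, Matrix.map_apply, chartJacobian, Matrix.of_apply, map_add,
    pderiv_map, apply_ite (MvPolynomial.map f), map_pow, map_X, map_zero]

/-- The coefficients of `M(v^m) ∧ v ∧ e_i`, as polynomials in `v`, where `q` are the components
of `M`. -/
noncomputable def wedgePoly {R : Type*} [CommRing R] [Algebra ℂ R] {b : ℕ}
    (q : {S : Finset (Fin (n + 1)) // S.card = b} → MvPolynomial (Fin (n + 1)) R)
    (i : Fin (n + 1)) : MvPolynomial (Fin (n + 1)) R :=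
  ∑ S, ∑ j, C (algebraMap ℂ R (wedgeCoeff S.1 j i)) * (q S * X j)

theorem isHomogeneous_wedgePoly {R : Type*} [CommRing R] [Algebra ℂ R] {b m : ℕ}
    {q : {S : Finset (Fin (n + 1)) // S.card = b} → MvPolynomial (Fin (n + 1)) R}
    (hq : ∀ S, (q S).IsHomogeneous m) (i : Fin (n + 1)) :
    (wedgePoly q i).IsHomogeneous (m + 1) :=
  IsHomogeneous.sum _ _ _ fun S _ => IsHomogeneous.sum _ _ _ fun j _ =>
    ((hq S).mul (isHomogeneous_X _ j)).C_mul _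

theorem map_wedgePoly {R S : Type*} [CommRing R] [Algebra ℂ R] [CommRing S] [Algebra ℂ S]
    (f : R →ₐ[ℂ] S) {b : ℕ}
    (q : {S : Finset (Fin (n + 1)) // S.card = b} → MvPolynomial (Fin (n + 1)) R)
    (i : Fin (n + 1)) :
    MvPolynomial.map (f : R →+* S) (wedgePoly q i) =
      wedgePoly (fun T => MvPolynomial.map (f : R →+* S) (q T)) i := by
  simp [wedgePoly]

theorem wedgePoly_combination {b : ℕ} (s t : ℂ)
    (q q' : {S : Finset (Fin (n + 1)) // S.card = b} → MvPolynomial (Fin (n + 1)) ℂ)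
    (i : Fin (n + 1)) :
    wedgePoly (fun S => C s * q S + C t * q' S) i =
      C s * wedgePoly q i + C t * wedgePoly q' i := by
  simp only [wedgePoly, Finset.mul_sum, ← Finset.sum_add_distrib]
  refine Finset.sum_congr rfl fun S _ => Finset.sum_congr rfl fun j _ => ?_
  ring

theorem polyMap_wedgePoly {b : ℕ}
    (q : {S : Finset (Fin (n + 1)) // S.card = b} → MvPolynomial (Fin (n + 1)) ℂ)
    (v : Fin (n + 1) → ℂ) (i : Fin (n + 1)) :
    polyMap (wedgePoly q) v i = topForm n (tval (n + 1) b q v * ExteriorAlgebra.ι ℂ v *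
      ExteriorAlgebra.ι ℂ (Pi.single i (1 : ℂ))) := by
  rw [ι_eq_sum v, tval, Finset.sum_mul_sum, Finset.sum_mul, map_sum, polyMap, wedgePoly, map_sum]
  refine Finset.sum_congr rfl fun S _ => ?_
  rw [Finset.sum_mul, map_sum, map_sum]
  refine Finset.sum_congr rfl fun j _ => ?_
  rw [smul_mul_smul_comm, smul_mul_assoc, map_smul, smul_eq_mul, ← wedgeCoeff]
  simp
  ring

theorem polyMap_wedgePoly_eq_zero_iff {b : ℕ} (hb : b + 1 = n)
    (q : {S : Finset (Fin (n + 1)) // S.card = b} → MvPolynomial (Fin (n + 1)) ℂ)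
    (v : Fin (n + 1) → ℂ) :
    polyMap (wedgePoly q) v = 0 ↔ tval (n + 1) b q v * ExteriorAlgebra.ι ℂ v = 0 := by
  rw [tval_mul_ι_eq_zero_iff hb, funext_iff]
  simp only [polyMap_wedgePoly, Pi.zero_apply]

theorem sum_mul_polyMap_wedgePoly {b : ℕ}
    (q : {S : Finset (Fin (n + 1)) // S.card = b} → MvPolynomial (Fin (n + 1)) ℂ)
    (v : Fin (n + 1) → ℂ) : ∑ i, v i * polyMap (wedgePoly q) v i = 0 := by
  have h : topForm n (tval (n + 1) b q v * ExteriorAlgebra.ι ℂ v * ExteriorAlgebra.ι ℂ v) = 0 := by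
    rw [mul_assoc, ExteriorAlgebra.ι_sq_zero, mul_zero, map_zero]
  rw [← h]
  conv_rhs => rw [ι_eq_sum v, Finset.mul_sum, map_sum]
  refine Finset.sum_congr rfl fun i _ => ?_
  rw [← ι_eq_sum, polyMap_wedgePoly, mul_smul_comm, map_smul, smul_eq_mul]

/-- The components of a tensor whose associated polynomials are `cyclicPoly`. -/
noncomputable def cyclicTensor (n m b : ℕ) (S : {S : Finset (Fin (n + 1)) // S.card = b}) :
    MvPolynomial (Fin (n + 1)) ℂ :=
  ∑ k, if S.1 = {k, k + 1}ᶜ then C (wedgeCoeff S.1 (k + 1) k) * X k ^ m else 0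

theorem isHomogeneous_cyclicTensor (n m b : ℕ)
    (S : {S : Finset (Fin (n + 1)) // S.card = b}) : (cyclicTensor n m b S).IsHomogeneous m := by
  refine IsHomogeneous.sum _ _ _ fun k _ => ?_
  split_ifs
  · exact (isHomogeneous_X_pow k m).C_mul _
  · exact isHomogeneous_zero _ _ _

theorem wedgePoly_cyclicTensor {m b : ℕ} (hn : 1 ≤ n) (hb : b + 1 = n) :
    wedgePoly (cyclicTensor n m b) = cyclicPoly n m := by
  have hne : ∀ k : Fin (n + 1), k ≠ k + 1 := by
    intro k hk
    have h1 : ((1 : Fin (n + 1)) : ℕ) = 0 := by rw [left_eq_add.1 hk]; rfl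
    simp only [Fin.coe_ofNat_eq_mod] at h1
    rw [Nat.mod_eq_of_lt (by omega)] at h1
    omega
  have hcard : ∀ k : Fin (n + 1), (({k, k + 1} : Finset (Fin (n + 1)))ᶜ).card = b := by
    intro k
    rw [Finset.card_compl, Finset.card_pair (hne k), Fintype.card_fin]
    omega
  funext i
  have hterm : ∀ k j, (C (wedgeCoeff ({k, k + 1} : Finset (Fin (n + 1)))ᶜ j i) *
      (C (wedgeCoeff ({k, k + 1} : Finset (Fin (n + 1)))ᶜ (k + 1) k) * X k ^ m * X j) :
        MvPolynomial (Fin (n + 1)) ℂ) =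
      (if k + 1 = j then if i = k then X k ^ m * X j else 0 else 0) -
        (if k = j then if i - 1 = k then X k ^ m * X j else 0 else 0) := by
    intro k j
    have hsq : (C (wedgeCoeff ({k, k + 1} : Finset (Fin (n + 1)))ᶜ (k + 1) k) *
        C (wedgeCoeff ({k, k + 1} : Finset (Fin (n + 1)))ᶜ (k + 1) k) :
          MvPolynomial (Fin (n + 1)) ℂ) = 1 := by
      rw [← C_mul, wedgeCoeff_mul_self (by rw [hcard, hb]) (by simp) (by simp) (hne k), C_1]
    have hi1 : i - 1 = k ↔ i = k + 1 := sub_eq_iff_eq_add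
    by_cases h1 : j = k + 1 ∧ i = k
    · obtain ⟨rfl, rfl⟩ := h1
      rw [if_pos rfl, if_pos rfl, if_neg (hne i)]
      linear_combination (X i ^ m * X (i + 1)) * hsq
    by_cases h2 : j = k ∧ i = k + 1
    · obtain ⟨rfl, rfl⟩ := h2
      rw [if_neg (hne j).symm, if_pos rfl, if_pos (by simp), wedgeCoeff_swap, C_neg]
      linear_combination (-(X j ^ m * X j)) * hsq
    · rw [wedgeCoeff_eq_zero, C_0, zero_mul]
      · simp only [hi1]
        split_ifs <;> grind
      · simp only [Finset.mem_compl, Finset.mem_insert, Finset.mem_singleton]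
        grind
  have hS : ∀ k, ∑ S : {S : Finset (Fin (n + 1)) // S.card = b}, ∑ j,
      (C (wedgeCoeff S.1 j i) * ((if S.1 = {k, k + 1}ᶜ then
        C (wedgeCoeff S.1 (k + 1) k) * X k ^ m else 0) * X j) : MvPolynomial (Fin (n + 1)) ℂ) =
      (if i = k then X k ^ m * X (k + 1) else 0) - (if i - 1 = k then X k ^ m * X k else 0) := by
    intro k
    rw [Finset.sum_eq_single ⟨{k, k + 1}ᶜ, hcard k⟩]
    · simp only [if_true, hterm, Finset.sum_sub_distrib, Finset.sum_ite_eq, Finset.mem_univ]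
    · intro S _ hS
      rw [if_neg fun h => hS (Subtype.ext h)]
      simp
    · simp
  simp only [wedgePoly, cyclicTensor, Finset.sum_mul, Finset.mul_sum, Algebra.algebraMap_self,
    RingHom.id_apply]
  calc _ = ∑ k, ∑ S : {S : Finset (Fin (n + 1)) // S.card = b}, ∑ j,
      (C (wedgeCoeff S.1 j i) * ((if S.1 = {k, k + 1}ᶜ then
        C (wedgeCoeff S.1 (k + 1) k) * X k ^ m else 0) * X j) : MvPolynomial (Fin (n + 1)) ℂ) := by
        exact (Finset.sum_congr rfl fun S _ => Finset.sum_comm).trans Finset.sum_comm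
    _ = cyclicPoly n m i := by
        simp only [hS, Finset.sum_sub_distrib, Finset.sum_ite_eq, Finset.mem_univ, if_true,
          cyclicPoly, pow_succ]

instance finite_finsupp_sum_eq (k m : ℕ) :
    Finite {μ : Fin k →₀ ℕ // (μ.sum fun _ e => e) = m} := by
  refine Set.Finite.subset (Finset.finite_toSet (Finset.univ.finsuppAntidiag m)) fun μ hμ => ?_
  simp only [Finset.mem_coe, Finset.mem_finsuppAntidiag]
  exact ⟨by rw [← Finsupp.degree_eq_sum]; exact hμ, Finset.subset_univ _⟩

noncomputable instance fintypeFinsuppSumEq (k m : ℕ) :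
    Fintype {μ : Fin k →₀ ℕ // (μ.sum fun _ e => e) = m} :=
  Fintype.ofFinite _

/-- The homogeneous polynomials of degree `m` indexed by `τ` with indeterminate coefficients. -/
noncomputable def genericPoly (τ : Type*) (k m : ℕ) (S : τ) :
    MvPolynomial (Fin k)
      (MvPolynomial (τ × {μ : Fin k →₀ ℕ // (μ.sum fun _ e => e) = m}) ℂ) :=
  ∑ μ : {μ : Fin k →₀ ℕ // (μ.sum fun _ e => e) = m}, monomial μ.1 (X (S, μ))

theorem isHomogeneous_genericPoly (τ : Type*) (k m : ℕ) (S : τ) :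
    (genericPoly τ k m S).IsHomogeneous m :=
  IsHomogeneous.sum _ _ _ fun μ _ => isHomogeneous_monomial _ μ.2

theorem map_genericPoly {τ : Type*} {k m : ℕ} {q : τ → MvPolynomial (Fin k) ℂ}
    (hq : ∀ S, (q S).IsHomogeneous m) (S : τ) :
    MvPolynomial.map (eval fun t => coeff t.2.1 (q t.1)) (genericPoly τ k m S) = q S := by
  classical
  ext ν
  simp only [genericPoly, map_sum, map_monomial, eval_X, coeff_sum, coeff_monomial]
  by_cases hν : (ν.sum fun _ e => e) = m
  · rw [Finset.sum_eq_single ⟨ν, hν⟩]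
    · simp
    · intro μ _ hμ
      rw [if_neg fun h => hμ (Subtype.ext h)]
    · simp
  · rw [(hq S).coeff_eq_zero hν]
    refine Finset.sum_eq_zero fun μ _ => if_neg ?_
    rintro rfl
    exact hν μ.2

theorem exists_genericity_poly {m b : ℕ} (hn : 1 ≤ n) (hm : 1 ≤ m) (hb : b + 1 = n) :
    ∃ D : MvPolynomial ({S : Finset (Fin (n + 1)) // S.card = b} ×
        {μ : Fin (n + 1) →₀ ℕ // (μ.sum fun _ e => e) = m}) ℂ,
      eval (fun t => coeff t.2.1 (cyclicTensor n m b t.1)) D ≠ 0 ∧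
      ∀ q : {S : Finset (Fin (n + 1)) // S.card = b} → MvPolynomial (Fin (n + 1)) ℂ,
        (∀ S, (q S).IsHomogeneous m) → eval (fun t => coeff t.2.1 (q t.1)) D ≠ 0 →
        HasSimpleZeros m (wedgePoly q) := by
  let G := wedgePoly (genericPoly {S : Finset (Fin (n + 1)) // S.card = b} (n + 1) m)
  have hG : ∀ i, (G i).IsHomogeneous (m + 1) :=
    isHomogeneous_wedgePoly (isHomogeneous_genericPoly _ _ _)
  let P : Option (Fin (n + 1)) → MvPolynomial (Fin (n + 1)) _ :=
    fun k => k.elim (chartJacobian m G).det G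
  have hmap : ∀ q : {S : Finset (Fin (n + 1)) // S.card = b} → MvPolynomial (Fin (n + 1)) ℂ,
      (∀ S, (q S).IsHomogeneous m) → (fun i => MvPolynomial.map
        (eval fun t => coeff t.2.1 (q t.1)) (G i)) = wedgePoly q := by
    intro q hq
    funext i
    have h := map_wedgePoly (MvPolynomial.aeval fun t => coeff t.2.1 (q t.1))
      (genericPoly {S : Finset (Fin (n + 1)) // S.card = b} (n + 1) m) i
    rw [coe_aeval_eq_eval] at h
    simpa only [map_genericPoly hq] using h
  have hiff : ∀ q : {S : Finset (Fin (n + 1)) // S.card = b} → MvPolynomial (Fin (n + 1)) ℂ,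
      (∀ S, (q S).IsHomogeneous m) → ((∀ v : Fin (n + 1) → ℂ, (∀ k, eval v (MvPolynomial.map
        (eval fun t => coeff t.2.1 (q t.1)) (P k)) = 0) → v = 0) ↔
      HasSimpleZeros m (wedgePoly q)) := by
    intro q hq
    refine forall_congr' fun v => ?_
    simp only [Option.forall, P, Option.elim, map_det_chartJacobian, ← hmap q hq, _root_.funext_iff,
      polyMap, Pi.zero_apply]
    tauto
  obtain ⟨D, hD₀, hD⟩ := exists_elimination_poly P
    (fun k => k.elim (Fintype.card (Fin (n + 1)) * m) fun _ => m + 1)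
    (by
      rintro (_ | i)
      · exact isHomogeneous_det_chartJacobian hG
      · exact hG i)
    (fun t => coeff t.2.1 (cyclicTensor n m b t.1))
    ((hiff _ (isHomogeneous_cyclicTensor n m b)).2 (by
      rw [wedgePoly_cyclicTensor hn hb]
      exact hasSimpleZeros_cyclicPoly hn hm))
  exact ⟨D, hD₀, fun q hq hDq => (hiff q hq).1 (hD _ hDq)⟩

theorem finite_setOf_eval_line_eq_zero {τ : Type*} (D : MvPolynomial τ ℂ) (c₀ c₁ : τ → ℂ)
    (h : eval c₀ D ≠ 0) :
    {t : ℂ | eval (fun x => (1 - t) * c₀ x + t * c₁ x) D = 0}.Finite := by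
  let F : Polynomial ℂ := MvPolynomial.aeval
    (fun x => (1 - Polynomial.X) * Polynomial.C (c₀ x) + Polynomial.X * Polynomial.C (c₁ x)) D
  have hF : ∀ t, F.eval t = eval (fun x => (1 - t) * c₀ x + t * c₁ x) D := by
    intro t
    have := MvPolynomial.comp_aeval_apply (R := ℂ)
      (fun x => (1 - Polynomial.X) * Polynomial.C (c₀ x) + Polynomial.X * Polynomial.C (c₁ x))
      (Polynomial.aeval t) D
    simpa [F, MvPolynomial.aeval_eq_eval, Polynomial.coe_aeval_eq_eval, mul_comm t] using this
  have hF0 : F ≠ 0 := by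
    intro h0
    have := hF 0
    simp [h0] at this
    exact h this.symm
  refine (F.finite_setOfPred_isRoot hF0).subset fun t ht => ?_
  rw [Set.mem_ofPred_eq, Polynomial.IsRoot, hF]
  exact ht

end GenericTensor

/-- **Count of eigenvectors for `a = n−1`** (Proposition 6.2): a general tensor
`M ∈ Hom(S^mℂ^{n+1}, Λ^{n−1}ℂ^{n+1})`, represented by its component polynomials
`(q_S)_{|S|=n−1}` homogeneous of degree `m` (`M(v^m) = Σ_S q_S(v) e_S`), has exactly
`((m+1)^{n+1} + (−1)^n)/(m+2)` eigenvector lines, where an eigenvector is a nonzero `v`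
with `M(v^m) ∧ v = 0` in `Λ^nℂ^{n+1}`. -/
theorem statement9 (n m : ℕ) (hn : 2 ≤ n) (hm : 1 ≤ m) :
    ∃ D : MvPolynomial
        ({S : Finset (Fin (n+1)) // S.card = n - 1} ×
          {μ : Fin (n+1) →₀ ℕ // (μ.sum fun _ e => e) = m}) ℂ,
      D ≠ 0 ∧
      ∀ q : {S : Finset (Fin (n+1)) // S.card = n - 1} → MvPolynomial (Fin (n+1)) ℂ,
        (∀ S, (q S).IsHomogeneous m) →
        MvPolynomial.eval (fun t => MvPolynomial.coeff t.2.1 (q t.1)) D ≠ 0 →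
        ∃ v : Fin (if Even n then ((m+1)^(n+1) + 1) / (m+2)
                   else ((m+1)^(n+1) - 1) / (m+2)) → Fin (n+1) → ℂ,
          (∀ i, v i ≠ 0) ∧
          (∀ i j, i ≠ j → ∀ lam : ℂ, v i ≠ lam • v j) ∧
          (∀ i, tval (n+1) (n-1) q (v i) * ExteriorAlgebra.ι ℂ (v i) = 0) ∧
          (∀ w : Fin (n+1) → ℂ, w ≠ 0 →
            tval (n+1) (n-1) q w * ExteriorAlgebra.ι ℂ w = 0 →
            ∃ i, ∃ mu : ℂ, w = mu • v i) := by
  obtain ⟨D, hD₀, hD⟩ := exists_genericity_poly (n := n) (m := m) (b := n - 1) (by omega) hm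
    (by omega)
  refine ⟨D, fun h => hD₀ (by rw [h, map_zero]), fun q hq hDq => ?_⟩
  have hiff := polyMap_wedgePoly_eq_zero_iff (n := n) (b := n - 1) (by omega) q
  have hsimple := hD q hq hDq
  have hcyc := wedgePoly_cyclicTensor (n := n) (m := m) (b := n - 1) (by omega) (by omega)
  have hcard : (affineZeros (polyMap (wedgePoly q))).ncard =
      (cyclicExponent (m + 1) (n + 1)).natAbs := by
    rw [← ncard_affineZeros_cyclicPoly (n := n) (by omega) hm, ← hcyc]
    refine ncard_affineZeros_eq_of_hasSimpleZeros (m := m)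
      (isHomogeneous_wedgePoly (isHomogeneous_cyclicTensor n m (n - 1)))
      (isHomogeneous_wedgePoly hq) (sum_mul_polyMap_wedgePoly _) (sum_mul_polyMap_wedgePoly _)
      (finite_setOf_eval_line_eq_zero D _ (fun t => coeff t.2.1 (q t.1)) hD₀)
      (by simpa using hD₀) (by simpa using hDq) fun t ht => ?_
    have h := hD (fun S => C (1 - t) * cyclicTensor n m (n - 1) S + C t * q S)
      (fun S => ((isHomogeneous_cyclicTensor n m (n - 1) S).C_mul _).add ((hq S).C_mul _))
      (by simp only [coeff_add, coeff_C_mul]; exact ht)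
    rwa [funext (wedgePoly_combination (1 - t) t (cyclicTensor n m (n - 1)) q)] at h
  rw [← natAbs_cyclicExponent n m, ← hcard, ← Nat.card_coe_set_eq]
  have hfin : (affineZeros (polyMap (wedgePoly q))).Finite := by
    refine Set.finite_of_ncard_ne_zero ?_
    rw [hcard]
    exact Int.natAbs_ne_zero.2 (cyclicExponent_ne_zero (by omega) hm)
  have := hfin.to_subtype
  let e := (Finite.equivFin (affineZeros (polyMap (wedgePoly q)))).symm
  refine ⟨fun i => (e i).1, fun i h => ?_, fun i j hij lam h => ?_, fun i => ?_, fun w hw hz => ?_⟩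
  · have h1 := (e i).2.1
    simp only at h
    rw [h] at h1
    simp at h1
  · simp only at h
    have h1 := congrFun h 0
    rw [Pi.smul_apply, (e i).2.1, (e j).2.1, smul_eq_mul, mul_one] at h1
    rw [← h1, one_smul] at h
    exact hij (e.injective (Subtype.ext h))
  · exact (hiff _).1 (e i).2.2
  · rw [← hiff] at hz
    have hw0 := hsimple.apply_zero_ne_zero (isHomogeneous_wedgePoly hq) hw hz
    refine ⟨e.symm ⟨(w 0)⁻¹ • w, by simp [hw0], ?_⟩, w 0, ?_⟩
    · rw [polyMap_smul (isHomogeneous_wedgePoly hq), hz, smul_zero]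
    · simp only
      rw [Equiv.apply_symm_apply, smul_inv_smul₀ hw0]
end

section
/- Let n ≥ 4, 2 ≤ a ≤ n−2, m ≥ 1, V = ℂ^{n+1}. For a general symmetric m-multilinear map M : V^m → Λ^aV (i.e., off the zero set of some nonzero polynomial in the coefficients of M), there is no nonzero v ∈ V with M(v,…,v) ∧ v = 0 in Λ^{a+1}V; that is, a general such tensor has no eigenvectors. -/
open MvPolynomial ExteriorAlgebra

/-- The minor, on the coordinates in `S` followed by `i`, of the matrix whose rows are the basis
vectors `e_t` for `t ∈ T` (in increasing order) followed by `v`. -/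
noncomputable def borderedMinor {R : Type*} [CommRing R] {k a : ℕ} (i : Fin k) (v : Fin k → R)
    (S T : {S : Finset (Fin k) // S.card = a}) : R :=
  (Matrix.of fun l c : Fin (a + 1) =>
    Fin.snoc (α := fun _ => Fin k → R) (fun l => Pi.single (T.1.orderEmbOfFin T.2 l) (1 : R)) v l
      (Fin.snoc (α := fun _ => Fin k) (S.1.orderEmbOfFin S.2) i c)).det

theorem map_borderedMinor {R R' : Type*} [CommRing R] [CommRing R'] (f : R →+* R') {k a : ℕ}
    (i : Fin k) (v : Fin k → R) (S T : {S : Finset (Fin k) // S.card = a}) :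
    f (borderedMinor i v S T) = borderedMinor i (fun j => f (v j)) S T := by
  unfold borderedMinor
  rw [RingHom.map_det]
  congr 1
  ext l c
  induction l using Fin.lastCases with
  | last => simp
  | cast l => simp [Pi.single_apply, apply_ite f]

theorem borderedMinor_self {R : Type*} [CommRing R] {k a : ℕ} {i : Fin k} (v : Fin k → R)
    {S : {S : Finset (Fin k) // S.card = a}} (hi : i ∉ S.1) :
    borderedMinor i v S S = v i := by
  unfold borderedMinor
  rw [Matrix.det_of_isLowerTriangular]
  · simp [Fin.prod_univ_castSucc]
  · intro l c hlc
    have hlc' : l < c := hlc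
    induction l using Fin.lastCases with
    | last => exact absurd hlc' (Fin.le_last c).not_gt
    | cast l =>
      induction c using Fin.lastCases with
      | last =>
        have : i ≠ S.1.orderEmbOfFin S.2 l := fun h => hi (h ▸ S.1.orderEmbOfFin_mem S.2 l)
        simp [this]
      | cast c =>
        have : c ≠ l := by rintro rfl; exact lt_irrefl _ hlc'
        simp [this]

theorem borderedMinor_eq_zero {R : Type*} [CommRing R] {k a : ℕ} {i : Fin k} (v : Fin k → R)
    {S T : {S : Finset (Fin k) // S.card = a}} (hT : i ∉ T.1) (hST : T ≠ S) :
    borderedMinor i v S T = 0 := by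
  obtain ⟨t, htT, htS⟩ : ∃ t ∈ T.1, t ∉ S.1 := by
    by_contra! h
    exact hST (Subtype.ext (Finset.eq_of_subset_of_card_le h (by rw [S.2, T.2])))
  obtain ⟨l, rfl⟩ : ∃ l, T.1.orderEmbOfFin T.2 l = t := by
    rw [← Set.mem_range, Finset.range_orderEmbOfFin]
    exact htT
  refine Matrix.det_eq_zero_of_row_eq_zero l.castSucc fun c => ?_
  induction c using Fin.lastCases with
  | last =>
    have : i ≠ T.1.orderEmbOfFin T.2 l := fun h => hT (h ▸ htT)
    simp [this]
  | cast c =>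
    have : S.1.orderEmbOfFin S.2 c ≠ T.1.orderEmbOfFin T.2 l :=
      fun h => htS (h ▸ S.1.orderEmbOfFin_mem S.2 c)
    simp [this]

theorem eWedge_mul_ι {k a : ℕ} (S : {S : Finset (Fin k) // S.card = a}) (v : Fin k → ℂ) :
    eWedge k S.1 * ExteriorAlgebra.ι ℂ v =
      ExteriorAlgebra.ιMulti ℂ (a + 1) (Fin.snoc (α := fun _ => Fin k → ℂ)
        (fun l => Pi.single (S.1.orderEmbOfFin S.2 l) (1 : ℂ)) v) := by
  have hsort : S.1.sort (· ≤ ·) = List.ofFn (S.1.orderEmbOfFin S.2) := by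
    refine List.ext_getElem (by simp [S.2]) fun l h₁ h₂ => ?_
    simp [Finset.orderEmbOfFin_apply]
  rw [ExteriorAlgebra.ιMulti_apply, eWedge, hsort, List.ofFn_succ']
  simp [Function.comp_def, List.map_ofFn]

/-- Coordinate `S ∪ {i}` of the eigenvector equation. -/
theorem eval_mul_add_sum_borderedMinor_eq_zero {k a : ℕ}
    {q : {S : Finset (Fin k) // S.card = a} → MvPolynomial (Fin k) ℂ} {v : Fin k → ℂ}
    (h : tval k a q v * ExteriorAlgebra.ι ℂ v = 0) {i : Fin k}
    {S : {S : Finset (Fin k) // S.card = a}} (hi : i ∉ S.1) :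
    eval v (q S) * v i + ∑ T : {T : Finset (Fin k) // T.card = a},
      (if i ∈ T.1 then eval v (q T) * borderedMinor i v S T else 0) = 0 := by
  classical
  let coords : (Fin k → ℂ) →ₗ[ℂ] (Fin (a + 1) → ℂ) :=
    LinearMap.funLeft ℂ ℂ (Fin.snoc (α := fun _ => Fin k) (S.1.orderEmbOfFin S.2) i)
  let ψ : ExteriorAlgebra ℂ (Fin k → ℂ) →ₗ[ℂ] ℂ :=
    ExteriorAlgebra.liftAlternating
      (Pi.single (a + 1) (Matrix.detRowAlternating.compLinearMap coords))
  have hψ : ∀ T : {T : Finset (Fin k) // T.card = a},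
      ψ (eWedge k T.1 * ExteriorAlgebra.ι ℂ v) = borderedMinor i v S T := by
    intro T
    rw [eWedge_mul_ι, ExteriorAlgebra.liftAlternating_apply_ιMulti, Pi.single_eq_same]
    rfl
  have hsum : ∑ T, eval v (q T) * borderedMinor i v S T = 0 := by
    have := congrArg ψ h
    simpa [tval, Finset.sum_mul, hψ] using this
  have hterm : ∀ T : {T : Finset (Fin k) // T.card = a},
      eval v (q T) * borderedMinor i v S T = (if T = S then eval v (q S) * v i else 0) +
        if i ∈ T.1 then eval v (q T) * borderedMinor i v S T else 0 := by
    intro T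
    by_cases hTS : T = S
    · subst hTS
      simp [hi, borderedMinor_self v hi]
    · by_cases hiT : i ∈ T.1
      · simp [hTS, hiT]
      · simp [hTS, hiT, borderedMinor_eq_zero v hiT hTS]
  simpa only [Finset.sum_congr rfl fun T _ => hterm T, Finset.sum_add_distrib, Finset.sum_ite_eq',
    Finset.mem_univ, if_true] using hsum

/-- Polynomials in fewer variables than their number satisfy a nontrivial relation. -/
theorem exists_ne_zero_aeval_eq_zero_of_card_lt {σ τ : Type} [Finite σ] [Finite τ]
    (h : Nat.card τ < Nat.card σ) (F : σ → MvPolynomial τ ℂ) :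
    ∃ D : MvPolynomial σ ℂ, D ≠ 0 ∧ aeval F D = 0 := by
  by_contra! hD
  have hF : AlgebraicIndependent ℂ F := by
    rw [algebraicIndependent_iff]
    exact fun p hp => by_contra fun hp0 => hD p hp0 hp
  have := hF.cardinalMk_le_trdeg
  rw [MvPolynomial.trdeg_of_isDomain, Cardinal.lift_id, ← Nat.cast_card, ← Nat.cast_card,
    Nat.cast_le] at this
  omega

theorem lt_choose_of_two_le {n a : ℕ} (hn : 4 ≤ n) (ha2 : 2 ≤ a) (han : a ≤ n - 2) :
    n < n.choose a := by
  induction n, hn using Nat.le_induction generalizing a with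
  | base =>
    obtain rfl : a = 2 := by omega
    decide
  | succ n hn ih =>
    obtain ⟨b, rfl⟩ : ∃ b, a = b + 1 := ⟨a - 1, by omega⟩
    rw [Nat.choose_succ_succ']
    rcases Nat.lt_or_ge (n - 2) (b + 1) with hb | hb
    · obtain ⟨c, rfl⟩ : ∃ c, n = c + 2 := ⟨n - 2, by omega⟩
      obtain rfl : b = c := by omega
      have h₁ := ih (a := 2) (by omega) (by omega)
      rw [← Nat.choose_symm (by omega : 2 ≤ b + 2), Nat.add_sub_cancel] at h₁
      have h₂ : 0 < (b + 2).choose (b + 1) := Nat.choose_pos (by omega)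
      omega
    · have h₁ := ih ha2 hb
      have h₂ : 0 < n.choose b := Nat.choose_pos (by omega)
      omega

instance finite_exponents (k m : ℕ) :
    Finite {μ : Fin k →₀ ℕ // (μ.sum fun _ e => e) = m} :=
  (Finsupp.finite_of_degree_le (σ := Fin k) m).subset fun _ hμ => le_of_eq hμ

noncomputable instance fintypeExponents (k m : ℕ) :
    Fintype {μ : Fin k →₀ ℕ // (μ.sum fun _ e => e) = m} :=
  Fintype.ofFinite _

theorem MvPolynomial.IsHomogeneous.eval_eq_sum_exponents {k m : ℕ} {p : MvPolynomial (Fin k) ℂ}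
    (hp : p.IsHomogeneous m) (v : Fin k → ℂ) :
    eval v p = ∑ μ : {μ : Fin k →₀ ℕ // (μ.sum fun _ e => e) = m},
      coeff μ.1 p * ∏ j, v j ^ μ.1 j := by
  have hfin : {μ : Fin k →₀ ℕ | (μ.sum fun _ e => e) = m}.Finite :=
    Set.finite_coe_iff.mp (finite_exponents k m)
  rw [eval_eq', ← Finset.sum_subtype (p := fun μ : Fin k →₀ ℕ => (μ.sum fun _ e => e) = m)
    hfin.toFinset (fun μ => hfin.mem_toFinset) fun μ => coeff μ p * ∏ j, v j ^ μ j]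
  refine Finset.sum_subset (fun μ hμ => ?_) fun μ _ hμ => ?_
  · rw [Set.Finite.mem_toFinset]
    simpa [Finsupp.weight_apply] using hp (mem_support_iff.mp hμ)
  · rw [notMem_support_iff.mp hμ, zero_mul]

theorem MvPolynomial.IsHomogeneous.eval_smul' {k m : ℕ} {p : MvPolynomial (Fin k) ℂ}
    (hp : p.IsHomogeneous m) (c : ℂ) (v : Fin k → ℂ) :
    eval (c • v) p = c ^ m * eval v p := by
  rw [hp.eval_eq_sum_exponents, hp.eval_eq_sum_exponents, Finset.mul_sum]
  refine Finset.sum_congr rfl fun μ _ => ?_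
  have hμ : ∑ j, μ.1 j = m := (Finsupp.sum_fintype _ _ fun _ => rfl).symm.trans μ.2
  simp only [Pi.smul_apply, smul_eq_mul, mul_pow, Finset.prod_mul_distrib,
    Finset.prod_pow_eq_pow_sum, hμ]
  ring

/-- The `i`-th pure power coefficient of `q_S` with `i ∉ S`, the coefficients that the eigenvector
equation determines from the others on the chart `v_i = 1`. -/
def IsDetermined {k a m : ℕ} (i : Fin k)
    (t : {S : Finset (Fin k) // S.card = a} ×
      {μ : Fin k →₀ ℕ // (μ.sum fun _ e => e) = m}) : Prop :=
  i ∉ t.1.1 ∧ t.2.1 = Finsupp.single i m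

theorem choose_le_card_isDetermined (n a m : ℕ) (i : Fin (n + 1)) :
    n.choose a ≤ Nat.card {t : {S : Finset (Fin (n + 1)) // S.card = a} ×
      {μ : Fin (n + 1) →₀ ℕ // (μ.sum fun _ e => e) = m} // IsDetermined i t} := by
  classical
  have hcard : Nat.card (Finset.powersetCard a (Finset.univ.erase i)) = n.choose a := by
    rw [Nat.card_eq_fintype_card, Fintype.card_coe, Finset.card_powersetCard,
      Finset.card_erase_of_mem (Finset.mem_univ i), Finset.card_univ, Fintype.card_fin,
      Nat.add_sub_cancel]
  rw [← hcard]
  refine Nat.card_le_card_of_injective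
    (fun S => ⟨(⟨S.1, (Finset.mem_powersetCard.mp S.2).2⟩, ⟨Finsupp.single i m, by simp⟩),
      fun hi => Finset.notMem_erase i _ ((Finset.mem_powersetCard.mp S.2).1 hi), rfl⟩) ?_
  intro S S' h
  exact Subtype.ext (congrArg (fun t => t.1.1.1) h)

theorem card_chart_lt {n a m : ℕ} (h : n < n.choose a) (i : Fin (n + 1)) :
    Nat.card ({t : {S : Finset (Fin (n + 1)) // S.card = a} ×
      {μ : Fin (n + 1) →₀ ℕ // (μ.sum fun _ e => e) = m} // ¬ IsDetermined i t} ⊕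
        {j : Fin (n + 1) // j ≠ i}) <
    Nat.card ({S : Finset (Fin (n + 1)) // S.card = a} ×
      {μ : Fin (n + 1) →₀ ℕ // (μ.sum fun _ e => e) = m}) := by
  classical
  have h₁ := choose_le_card_isDetermined n a m i
  have h₂ : Nat.card {j : Fin (n + 1) // j ≠ i} = n := by simp
  have h₃ := Nat.card_congr (Equiv.sumCompl (IsDetermined (a := a) (m := m) i))
  rw [Nat.card_sum] at h₃ ⊢
  omega

/-- On the chart `v_i = 1`, the tensors having an eigenvector are the image of a polynomial map
from an affine space of smaller dimension, hence satisfy a nontrivial equation. -/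
theorem exists_ne_zero_eval_eq_zero_of_chart {n a : ℕ} (m : ℕ) (h : n < n.choose a)
    (i : Fin (n + 1)) :
    ∃ D : MvPolynomial
        ({S : Finset (Fin (n+1)) // S.card = a} ×
          {μ : Fin (n+1) →₀ ℕ // (μ.sum fun _ e => e) = m}) ℂ,
      D ≠ 0 ∧
      ∀ q : {S : Finset (Fin (n+1)) // S.card = a} → MvPolynomial (Fin (n+1)) ℂ,
        (∀ S, (q S).IsHomogeneous m) →
        ∀ v : Fin (n+1) → ℂ, v i = 1 → tval (n+1) a q v * ExteriorAlgebra.ι ℂ v = 0 →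
          eval (fun t => coeff t.2.1 (q t.1)) D = 0 := by
  classical
  let Coeffs := {S : Finset (Fin (n+1)) // S.card = a} ×
    {μ : Fin (n+1) →₀ ℕ // (μ.sum fun _ e => e) = m}
  let R := MvPolynomial ({t : Coeffs // ¬ IsDetermined i t} ⊕ {j : Fin (n + 1) // j ≠ i}) ℂ
  let V : Fin (n + 1) → R := fun j => if hj : j = i then 1 else X (Sum.inr ⟨j, hj⟩)
  let C : Coeffs → R := fun t => if ht : IsDetermined i t then 0 else X (Sum.inl ⟨t, ht⟩)
  let Q : {S : Finset (Fin (n+1)) // S.card = a} → R := fun S => ∑ μ, C (S, μ) * ∏ j, V j ^ μ.1 j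
  let F : Coeffs → R := fun t => if IsDetermined i t then
      -(Q t.1 + ∑ T : {T : Finset (Fin (n+1)) // T.card = a},
        if i ∈ T.1 then Q T * borderedMinor i V t.1 T else 0)
    else C t
  obtain ⟨D, hD, hDF⟩ := exists_ne_zero_aeval_eq_zero_of_card_lt (card_chart_lt h i) F
  refine ⟨D, hD, fun q hq v hvi hv => ?_⟩
  let coeffs : Coeffs → ℂ := fun t => coeff t.2.1 (q t.1)
  let ev : R →+* ℂ := eval (Sum.elim (fun t => coeffs t.1) fun j => v j.1)
  have hV : ∀ j, ev (V j) = v j := by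
    intro j
    by_cases hj : j = i
    · subst hj; simp [V, hvi]
    · simp only [V, dif_neg hj]
      exact eval_X _
  have hC : ∀ t, ev (C t) = if IsDetermined i t then 0 else coeffs t := by
    intro t
    by_cases ht : IsDetermined i t
    · simp [C, ht]
    · simp only [C, dif_neg ht, if_neg ht]
      exact eval_X _
  have hQ : ∀ S, ev (Q S) =
      ∑ μ, (if IsDetermined i (S, μ) then 0 else coeffs (S, μ)) * ∏ j, v j ^ μ.1 j := by
    intro S
    simp only [Q, map_sum, map_mul, map_prod, map_pow, hV, hC]
  have hQ_mem : ∀ T : {T : Finset (Fin (n+1)) // T.card = a}, i ∈ T.1 →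
      ev (Q T) = eval v (q T) := by
    intro T hT
    rw [hQ, (hq T).eval_eq_sum_exponents]
    exact Finset.sum_congr rfl fun μ _ => by rw [if_neg fun ht => ht.1 hT]
  have hQ_notMem : ∀ t : Coeffs, IsDetermined i t →
      coeffs t + ev (Q t.1) = eval v (q t.1) := by
    rintro ⟨S, ν⟩ ht
    have hν : ∏ j, v j ^ ν.1 j = 1 := by
      rw [show ν.1 = Finsupp.single i m from ht.2]
      refine Finset.prod_eq_one fun j _ => ?_
      by_cases hj : j = i
      · subst hj; simp [hvi]
      · simp [hj]
    rw [hQ, (hq S).eval_eq_sum_exponents, ← Finset.add_sum_erase _ _ (Finset.mem_univ ν),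
      ← Finset.add_sum_erase _ (fun μ => coeff μ.1 (q S) * _) (Finset.mem_univ ν), if_pos ht,
      zero_mul, zero_add, hν, mul_one]
    congr 1
    refine Finset.sum_congr rfl fun μ hμ => ?_
    rw [if_neg fun hμi => Finset.ne_of_mem_erase hμ (Subtype.ext (hμi.2.trans ht.2.symm))]
  have hF : ∀ t, ev (F t) = coeffs t := by
    intro t
    by_cases ht : IsDetermined i t
    · have key := eval_mul_add_sum_borderedMinor_eq_zero hv ht.1
      have hsum : ev (∑ T : {T : Finset (Fin (n+1)) // T.card = a},
          if i ∈ T.1 then Q T * borderedMinor i V t.1 T else 0) =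
          ∑ T : {T : Finset (Fin (n+1)) // T.card = a},
            if i ∈ T.1 then eval v (q T) * borderedMinor i v t.1 T else 0 := by
        rw [map_sum]
        refine Finset.sum_congr rfl fun T _ => ?_
        split_ifs with hT
        · rw [map_mul, hQ_mem T hT, map_borderedMinor, funext hV]
        · exact map_zero _
      simp only [F, if_pos ht, map_neg, map_add, hsum]
      rw [hvi, mul_one, ← hQ_notMem t ht] at key
      linear_combination -key
    · simp only [F, if_neg ht, hC]
  have hcomp : ev (aeval F D) = eval coeffs D := by
    rw [aeval_def, hom_eval₂, funext hF,
      show ev.comp (algebraMap ℂ R) = RingHom.id ℂ from RingHom.ext fun c => eval_C c]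
    rfl
  rw [← hcomp, hDF, map_zero]

/-- **No eigenvectors in middle degrees** (part of Theorem 3.3): for `n ≥ 4`,
`2 ≤ a ≤ n−2`, `m ≥ 1`, a general tensor `M ∈ Hom(S^mℂ^{n+1}, Λ^aℂ^{n+1})`,
represented by its component polynomials `(q_S)_{|S|=a}` homogeneous of degree `m`,
has no eigenvectors: there is no nonzero `v` with `M(v^m) ∧ v = 0` in `Λ^{a+1}ℂ^{n+1}`. -/
theorem statement10 (n a m : ℕ) (hn : 4 ≤ n) (ha2 : 2 ≤ a) (han : a ≤ n - 2)
    (hm : 1 ≤ m) :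
    ∃ D : MvPolynomial
        ({S : Finset (Fin (n+1)) // S.card = a} ×
          {μ : Fin (n+1) →₀ ℕ // (μ.sum fun _ e => e) = m}) ℂ,
      D ≠ 0 ∧
      ∀ q : {S : Finset (Fin (n+1)) // S.card = a} → MvPolynomial (Fin (n+1)) ℂ,
        (∀ S, (q S).IsHomogeneous m) →
        MvPolynomial.eval (fun t => MvPolynomial.coeff t.2.1 (q t.1)) D ≠ 0 →
        ∀ v : Fin (n+1) → ℂ, v ≠ 0 →
          tval (n+1) a q v * ExteriorAlgebra.ι ℂ v ≠ 0 := by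
  choose D hD hDq using
    exists_ne_zero_eval_eq_zero_of_chart m (lt_choose_of_two_le hn ha2 han)
  refine ⟨∏ i, D i, Finset.prod_ne_zero_iff.mpr fun i _ => hD i, fun q hq hne v hv h => ?_⟩
  obtain ⟨i, hi⟩ := Function.ne_iff.mp hv
  rw [Pi.zero_apply] at hi
  rw [map_prod, Finset.prod_ne_zero_iff] at hne
  refine hne i (Finset.mem_univ i) (hDq i q hq ((v i)⁻¹ • v) (by simp [hi]) ?_)
  have htval : tval (n+1) a q ((v i)⁻¹ • v) = (v i)⁻¹ ^ m • tval (n+1) a q v := by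
    simp only [tval, (hq _).eval_smul', Finset.smul_sum, smul_smul]
  rw [htval, map_smul, smul_mul_smul_comm, h, smul_zero]
end

section
/- Let m ≥ 0 and let s be an integer with 2s ≤ (m+3)(m+1). For a general tuple of nonzero vectors v_1,…,v_s ∈ ℂ³, the linear map from symmetric m-multilinear maps M : (ℂ³)^m → ℂ³ to ⊕_{i=1}^s ℂ³/⟨v_i⟩ sending M to (M(v_i,…,v_i) mod ⟨v_i⟩)_{i=1,…,s} is surjective; equivalently, the subspace of those M having each v_i as an eigenvector has codimension exactly 2s, i.e. dimension 3·binom(m+2,2) − 2s. -/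
open MvPolynomial

/-- The degree-`m` tensors on `ℂ³` surject onto `⨁ i, ℂ³ / ⟨v i⟩` by evaluation at the `v i`. -/
def EvaluationSurjective (m : ℕ) {ι : Type} (v : ι → Fin 3 → ℂ) : Prop :=
  ∀ y : ι → Fin 3 → ℂ, ∃ p : Fin 3 → MvPolynomial (Fin 3) ℂ,
    (∀ k, (p k).IsHomogeneous m) ∧
    ∀ i, ∃ lam : ℂ, (fun k => MvPolynomial.eval (v i) (p k)) - y i = lam • v i

lemma EvaluationSurjective.comp {m : ℕ} {ι κ : Type} {v : ι → Fin 3 → ℂ}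
    (h : EvaluationSurjective m v) {f : κ → ι} (hf : Function.Injective f) :
    EvaluationSurjective m (v ∘ f) := by
  intro y
  obtain ⟨p, hp, hv⟩ := h (Function.extend f y 0)
  refine ⟨p, hp, fun i => ?_⟩
  simpa [hf.extend_apply] using hv (f i)

/-- The point with parameter `a` on the conic `x z = t y²`. -/
def conicPoint (t a : ℂ) : Fin 3 → ℂ := ![1, a, t * a ^ 2]

/-- Every polynomial of degree at most `2m` in the parameter of a smooth conic is the restriction
of a form of degree `m`. -/
lemma exists_isHomogeneous_eval_conicPoint (m : ℕ) {t : ℂ} (ht : t ≠ 0) (f : Polynomial ℂ)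
    (hf : f.natDegree < 2 * m + 1) :
    ∃ P : MvPolynomial (Fin 3) ℂ, P.IsHomogeneous m ∧
      ∀ a, MvPolynomial.eval (conicPoint t a) P = f.eval a := by
  have monomial_case : ∀ j : ℕ, ∃ P : MvPolynomial (Fin 3) ℂ, j < 2 * m + 1 →
      P.IsHomogeneous m ∧ ∀ a, MvPolynomial.eval (conicPoint t a) P = a ^ j := by
    intro j
    rcases le_total j m with hj | hj
    · refine ⟨X 0 ^ (m - j) * X 1 ^ j, fun _ => ⟨?_, fun a => by simp [conicPoint]⟩⟩
      have := (isHomogeneous_X_pow (R := ℂ) (0 : Fin 3) (m - j)).mul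
        (isHomogeneous_X_pow (R := ℂ) (1 : Fin 3) j)
      rwa [Nat.sub_add_cancel hj] at this
    · refine ⟨C (t⁻¹ ^ (j - m)) * (X 1 ^ (2 * m - j) * X 2 ^ (j - m)),
        fun hj' => ⟨?_, fun a => ?_⟩⟩
      · have := ((isHomogeneous_X_pow (R := ℂ) (1 : Fin 3) (2 * m - j)).mul
          (isHomogeneous_X_pow (R := ℂ) (2 : Fin 3) (j - m))).C_mul (t⁻¹ ^ (j - m))
        rwa [show 2 * m - j + (j - m) = m by omega] at this
      · have hexp : 2 * m - j + 2 * (j - m) = j := by omega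
        calc MvPolynomial.eval (conicPoint t a)
              (C (t⁻¹ ^ (j - m)) * (X 1 ^ (2 * m - j) * X 2 ^ (j - m)))
            = (t⁻¹ * t) ^ (j - m) * a ^ (2 * m - j + 2 * (j - m)) := by
              simp [conicPoint]; ring
          _ = a ^ j := by rw [inv_mul_cancel₀ ht, one_pow, one_mul, hexp]
  choose P hP using monomial_case
  refine ⟨∑ j ∈ Finset.range (2 * m + 1), C (f.coeff j) * P j, ?_, fun a => ?_⟩
  · exact IsHomogeneous.sum _ _ _ fun j hj => (hP j (Finset.mem_range.mp hj)).1.C_mul _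
  · rw [Polynomial.eval_eq_sum_range' hf, map_sum]
    refine Finset.sum_congr rfl fun j hj => ?_
    rw [map_mul, eval_C, (hP j (Finset.mem_range.mp hj)).2]

/-- Solves `x f₀ - f₁ = g₁`, `t x f₁ - f₂ = g₂` in polynomials of degree at most `2m`. -/
lemma exists_polynomial_syzygy_lift {m : ℕ} (hm : 1 ≤ m) {t : ℂ} (ht : t ≠ 0)
    (g₁ g₂ : Polynomial ℂ) (h₁ : g₁.degree < (2 * m + 2 : ℕ))
    (h₂ : g₂.degree < (2 * m + 2 : ℕ)) :
    ∃ f₀ f₁ f₂ : Polynomial ℂ, f₀.natDegree < 2 * m + 1 ∧ f₁.natDegree < 2 * m + 1 ∧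
      f₂.natDegree < 2 * m + 1 ∧ ∀ a : ℂ,
        a * f₀.eval a - f₁.eval a = g₁.eval a ∧ t * a * f₁.eval a - f₂.eval a = g₂.eval a := by
  set b : ℂ := g₁.coeff 0
  set c : ℂ := t⁻¹ * g₂.coeff (2 * m + 1)
  set r : Polynomial ℂ := Polynomial.C c * Polynomial.X ^ (2 * m) - Polynomial.C b with hr
  have coeff_zero_of_le : ∀ g : Polynomial ℂ, g.degree < (2 * m + 2 : ℕ) →
      ∀ n, 2 * m + 2 ≤ n → g.coeff n = 0 := fun g hg n hn =>
    Polynomial.coeff_eq_zero_of_degree_lt (hg.trans_le (by exact_mod_cast hn))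
  have hrcoeff : ∀ n, 2 * m + 1 ≤ n → r.coeff n = 0 := by
    intro n hn
    simp [hr, Polynomial.coeff_X_pow, Polynomial.coeff_C, show n ≠ 2 * m by omega,
      show n ≠ 0 by omega]
  refine ⟨(g₁ + r).divX, r, Polynomial.C t * Polynomial.X * r - g₂, ?_, ?_, ?_, fun a => ⟨?_, ?_⟩⟩
  · rw [Nat.lt_succ_iff, Polynomial.natDegree_le_iff_coeff_eq_zero]
    intro n hn
    rw [Polynomial.coeff_divX, Polynomial.coeff_add, coeff_zero_of_le g₁ h₁ _ (by omega),
      hrcoeff _ (by omega), add_zero]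
  · rw [Nat.lt_succ_iff, Polynomial.natDegree_le_iff_coeff_eq_zero]
    exact fun n hn => hrcoeff n hn
  · rw [Nat.lt_succ_iff, Polynomial.natDegree_le_iff_coeff_eq_zero]
    intro n hn
    obtain ⟨k, rfl⟩ : ∃ k, n = k + 1 := ⟨n - 1, by omega⟩
    rw [Polynomial.coeff_sub, mul_assoc, Polynomial.coeff_C_mul, Polynomial.coeff_X_mul]
    rcases eq_or_ne k (2 * m) with rfl | hk
    · have : r.coeff (2 * m) = c := by
        simp [hr, Polynomial.coeff_C, show m ≠ 0 by omega]
      rw [this, mul_inv_cancel_left₀ ht, sub_self]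
    · rw [hrcoeff k (by omega), coeff_zero_of_le g₂ h₂ _ (by omega)]
      simp
  · have hzero : (g₁ + r).coeff 0 = 0 := by
      simp [hr, Polynomial.coeff_X_pow, show (0 : ℕ) ≠ 2 * m by omega, b]
    have := congrArg (Polynomial.eval a) (Polynomial.X_mul_divX_add (g₁ + r))
    rw [hzero] at this
    simp only [Polynomial.eval_add, Polynomial.eval_mul, Polynomial.eval_X, map_zero,
      add_zero] at this
    rw [this]; ring
  · simp

/-- The bundle of tensors modulo eigenvectors restricts to a conic as a balanced bundle, so
`2m + 2` points on the conic impose independent conditions. -/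
lemma evaluationSurjective_conicPoint {m : ℕ} (hm : 1 ≤ m) {t : ℂ} (ht : t ≠ 0)
    {a : Fin (2 * m + 2) → ℂ} (ha : Function.Injective a) :
    EvaluationSurjective m (fun i => conicPoint t (a i)) := by
  intro y
  have interpolate : ∀ r : Fin (2 * m + 2) → ℂ, ∃ g : Polynomial ℂ,
      g.degree < (2 * m + 2 : ℕ) ∧ ∀ i, g.eval (a i) = r i := fun r =>
    ⟨Lagrange.interpolate Finset.univ a r,
      by simpa using Lagrange.degree_interpolate_lt (s := Finset.univ) r ha.injOn,
      fun i => Lagrange.eval_interpolate_at_node r ha.injOn (Finset.mem_univ i)⟩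
  obtain ⟨g₁, h₁, e₁⟩ := interpolate fun i => a i * y i 0 - y i 1
  obtain ⟨g₂, h₂, e₂⟩ := interpolate fun i => t * a i * y i 1 - y i 2
  obtain ⟨f₀, f₁, f₂, d₀, d₁, d₂, hf⟩ := exists_polynomial_syzygy_lift hm ht g₁ g₂ h₁ h₂
  obtain ⟨P₀, H₀, E₀⟩ := exists_isHomogeneous_eval_conicPoint m ht f₀ d₀
  obtain ⟨P₁, H₁, E₁⟩ := exists_isHomogeneous_eval_conicPoint m ht f₁ d₁
  obtain ⟨P₂, H₂, E₂⟩ := exists_isHomogeneous_eval_conicPoint m ht f₂ d₂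
  refine ⟨![P₀, P₁, P₂], fun k => by fin_cases k <;> assumption, fun i =>
    ⟨f₀.eval (a i) - y i 0, ?_⟩⟩
  obtain ⟨q₁, q₂⟩ := hf (a i)
  rw [e₁] at q₁
  rw [e₂] at q₂
  simp only [conicPoint] at E₀ E₁ E₂ ⊢
  ext k
  fin_cases k
  · simp [E₀]
  · simp [E₁]
    linear_combination -q₁
  · simp [E₂]
    linear_combination -q₂ - t * a i * q₁

/-- Points on a curve of degree `d` can be added to points off it, raising the degree by `d`. -/
lemma EvaluationSurjective.sum {m d : ℕ} {ι κ : Type} {v : ι → Fin 3 → ℂ} {w : κ → Fin 3 → ℂ}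
    (hv : EvaluationSurjective m v) (hw : EvaluationSurjective (m + d) w)
    {q : MvPolynomial (Fin 3) ℂ} (hq : q.IsHomogeneous d)
    (hqv : ∀ i, MvPolynomial.eval (v i) q ≠ 0) (hqw : ∀ j, MvPolynomial.eval (w j) q = 0) :
    EvaluationSurjective (m + d) (Sum.elim v w) := by
  intro y
  obtain ⟨p, hp, hpw⟩ := hw (y ∘ Sum.inr)
  obtain ⟨r, hr, hrv⟩ := hv fun i =>
    (MvPolynomial.eval (v i) q)⁻¹ • (y (Sum.inl i) - fun k => MvPolynomial.eval (v i) (p k))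
  refine ⟨fun k => p k + r k * q, fun k => (hp k).add ((hr k).mul hq), ?_⟩
  rintro (i | j)
  · obtain ⟨lam, hlam⟩ := hrv i
    refine ⟨MvPolynomial.eval (v i) q * lam, ?_⟩
    ext k
    have := congrFun hlam k
    simp only [Pi.sub_apply, Pi.smul_apply, smul_eq_mul, Sum.elim_inl, map_add, map_mul] at this ⊢
    rw [mul_assoc, ← this, mul_sub, mul_inv_cancel_left₀ (hqv i)]
    ring
  · obtain ⟨lam, hlam⟩ := hpw j
    refine ⟨lam, ?_⟩
    simpa [hqw j] using hlam

lemma exists_evaluationSurjective (m : ℕ) :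
    ∃ (ι : Type) (_ : Fintype ι) (t a : ι → ℂ), Fintype.card ι = (m + 3) * (m + 1) / 2 ∧
      (∀ i, a i ≠ 0) ∧ (∀ i, ∃ k : ℕ, k ≤ m ∧ t i = k + 1) ∧
      EvaluationSurjective m (fun i => conicPoint (t i) (a i)) := by
  have parameters_injective : ∀ n : ℕ, Function.Injective fun i : Fin n => ((i : ℕ) + 1 : ℂ) :=
    fun n i j h => Fin.ext (by simpa using h)
  induction m using Nat.twoStepInduction with
  | zero =>
    refine ⟨Unit, inferInstance, 1, 1, by simp, by simp, fun _ => ⟨0, le_rfl, by simp⟩, fun y =>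
      ⟨fun k => C (y () k), fun k => isHomogeneous_C _ _, fun i => ⟨0, ?_⟩⟩⟩
    ext k
    simp
  | one =>
    exact ⟨Fin 4, inferInstance, fun _ => 1, fun i => (i : ℕ) + 1, by simp,
      fun i => Nat.cast_add_one_ne_zero _, fun _ => ⟨0, by simp, by simp⟩,
      evaluationSurjective_conicPoint le_rfl one_ne_zero (parameters_injective 4)⟩
  | more m ih _ =>
    obtain ⟨ι, _, t, a, hcard, ha, ht, h⟩ := ih
    have hconic : ((m + 2 : ℕ) + 1 : ℂ) ≠ 0 := Nat.cast_add_one_ne_zero _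
    have hw := evaluationSurjective_conicPoint (show 1 ≤ m + 2 by omega) hconic
      (parameters_injective (2 * (m + 2) + 2))
    have hq : (X 0 * X 2 - C ((m + 2 : ℕ) + 1 : ℂ) * X 1 ^ 2 :
        MvPolynomial (Fin 3) ℂ).IsHomogeneous 2 :=
      ((isHomogeneous_X ℂ 0).mul (isHomogeneous_X ℂ 2)).sub
        ((isHomogeneous_X_pow 1 2).C_mul _)
    have hsum := h.sum hw hq (fun i => ?_) (fun j => by simp [conicPoint])
    · refine ⟨ι ⊕ Fin (2 * (m + 2) + 2), inferInstance,
        Sum.elim t fun _ => ((m + 2 : ℕ) + 1 : ℂ), Sum.elim a fun i => (i : ℕ) + 1, ?_, ?_, ?_, ?_⟩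
      · rw [Fintype.card_sum, hcard, Fintype.card_fin,
          show (m + 2 + 3) * (m + 2 + 1) = (m + 3) * (m + 1) + 2 * (2 * (m + 2) + 2) by ring]
        omega
      · rintro (i | j)
        exacts [ha i, Nat.cast_add_one_ne_zero _]
      · rintro (i | j)
        · obtain ⟨k, hk, e⟩ := ht i
          exact ⟨k, by omega, e⟩
        · exact ⟨m + 2, le_rfl, rfl⟩
      · convert hsum using 2 with i
        rcases i with i | j <;> rfl
    · obtain ⟨k, hk, e⟩ := ht i
      have hne : (k : ℂ) - (m + 2 : ℕ) ≠ 0 := by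
        rw [sub_ne_zero, Ne, Nat.cast_inj]
        omega
      have : MvPolynomial.eval (conicPoint (t i) (a i))
          (X 0 * X 2 - C ((m + 2 : ℕ) + 1 : ℂ) * X 1 ^ 2) = (k - (m + 2 : ℕ)) * a i ^ 2 := by
        simp [conicPoint, e]; ring
      rw [this]
      exact mul_ne_zero hne (pow_ne_zero 2 (ha i))

/-- Surjectivity of evaluation at one tuple implies it at a general tuple. -/
lemma EvaluationSurjective.exists_polynomial {m s : ℕ} {w : Fin s → Fin 3 → ℂ}
    (hw : EvaluationSurjective m w) :
    ∃ D : MvPolynomial (Fin s × Fin 3) ℂ, D ≠ 0 ∧ ∀ v : Fin s → Fin 3 → ℂ,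
      MvPolynomial.eval (fun t => v t.1 t.2) D ≠ 0 → EvaluationSurjective m v := by
  choose p hp lam hlam using fun e : Fin s × Fin 3 => hw fun j l => if (j, l) = e then 1 else 0
  set A : Matrix (Fin s × Fin 3) (Fin s × Fin 3) (MvPolynomial (Fin s × Fin 3) ℂ) :=
    Matrix.of fun r e => rename (Prod.mk r.1) (p e r.2) - C (lam e r.1) * X r with hA
  have evalA : ∀ v : Fin s → Fin 3 → ℂ, ∀ r e,
      (MvPolynomial.eval fun t => v t.1 t.2).mapMatrix A r e =
        MvPolynomial.eval (v r.1) (p e r.2) - lam e r.1 * v r.1 r.2 := by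
    intro v r e
    simp [hA, eval_rename, Function.comp_def]
  refine ⟨A.det, fun hzero => ?_, fun v hv y => ?_⟩
  · have hone : (MvPolynomial.eval fun t => w t.1 t.2).mapMatrix A = 1 := by
      ext r e
      rw [evalA, Matrix.one_apply]
      have := congrFun (hlam e r.1) r.2
      simp only [Pi.sub_apply, Pi.smul_apply, smul_eq_mul] at this
      rw [← this, sub_sub_cancel]
    have := RingHom.map_det (MvPolynomial.eval fun t => w t.1 t.2) A
    rw [hone, hzero, map_zero, Matrix.det_one] at this
    exact zero_ne_one this
  · rw [RingHom.map_det] at hv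
    obtain ⟨c, hc⟩ := (Matrix.mulVec_surjective_iff_isUnit.mpr
      ((Matrix.isUnit_iff_isUnit_det _).mpr hv.isUnit)) fun r => y r.1 r.2
    refine ⟨fun k => ∑ e, C (c e) * p e k,
      fun k => IsHomogeneous.sum _ _ _ fun e _ => (hp e k).C_mul _,
      fun i => ⟨∑ e, c e * lam e i, ?_⟩⟩
    ext k
    have := congrFun hc (i, k)
    simp only [Matrix.mulVec, dotProduct, evalA] at this
    simp only [Pi.sub_apply, Pi.smul_apply, smul_eq_mul, map_sum, map_mul, eval_C, ← this,
      Finset.sum_mul, ← Finset.sum_sub_distrib]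
    exact Finset.sum_congr rfl fun e _ => by ring

/-- Theorem 5.1(i) for `ℙ²`: if `2s ≤ (m+3)(m+1)`, then for a general tuple of nonzero
vectors `v_1,…,v_s ∈ ℂ³`, the evaluation map sending a tensor
`M ∈ Hom(S^mℂ³, ℂ³)` (represented by three homogeneous degree-`m` component
polynomials) to `(M(v_i^m) mod ⟨v_i⟩)_i ∈ ⊕_i ℂ³/⟨v_i⟩` is surjective; equivalently,
the tensors having each `v_i` as an eigenvector form a subspace of codimension `2s`. -/
theorem statement11 (m s : ℕ) (hs : 2 * s ≤ (m + 3) * (m + 1)) :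
    ∃ D : MvPolynomial (Fin s × Fin 3) ℂ, D ≠ 0 ∧
      ∀ v : Fin s → Fin 3 → ℂ, (∀ i, v i ≠ 0) →
        MvPolynomial.eval (fun t => v t.1 t.2) D ≠ 0 →
        ∀ y : Fin s → Fin 3 → ℂ,
          ∃ p : Fin 3 → MvPolynomial (Fin 3) ℂ,
            (∀ k, (p k).IsHomogeneous m) ∧
            ∀ i, ∃ lam : ℂ, (fun k => MvPolynomial.eval (v i) (p k)) - y i = lam • v i := by
  obtain ⟨ι, _, t, a, hcard, -, -, h⟩ := exists_evaluationSurjective m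
  obtain ⟨f⟩ : Nonempty (Fin s ↪ ι) := Function.Embedding.nonempty_of_card_le (by
    rw [Fintype.card_fin, hcard]
    omega)
  obtain ⟨D, hD, hsurj⟩ := (h.comp f.injective).exists_polynomial
  exact ⟨D, hD, fun v _ hv => hsurj v hv⟩
end

section
/- Let m ≥ 2 and 2s ≤ m² + 3m + 4, or m = 1 and s ≤ 3. For a general tuple of nonzero vectors v_1,…,v_s ∈ ℂ³, let W = {M ∈ Hom(S^mℂ³, ℂ³) : M(v_i^m) ∧ v_i = 0 for all i = 1,…,s}. Then a nonzero v ∈ ℂ³ satisfies M(v^m) ∧ v = 0 for every M ∈ W if and only if v is a scalar multiple of some v_i; that is, the common eigenvectors of W are exactly the nonzero multiples of v_1,…,v_s. -/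
open MvPolynomial ExteriorAlgebra

/-- A family of points is unisolvent in degree `m` if no nonzero form of degree `m` vanishes on
it. -/
def Unisolvent {ι : Type*} (m : ℕ) (v : ι → Fin 3 → ℂ) : Prop :=
  ∀ f : MvPolynomial (Fin 3) ℂ, f.IsHomogeneous m → (∀ i, eval (v i) f = 0) → f = 0

/-- `u` is an eigenvector of every tensor of degree `m` having all the `v i` as eigenvectors. -/
def IsCommonEigenvector {ι : Type*} (m : ℕ) (v : ι → Fin 3 → ℂ) (u : Fin 3 → ℂ) : Prop :=
  ∀ p : Fin 3 → MvPolynomial (Fin 3) ℂ, (∀ k, (p k).IsHomogeneous m) →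
    (∀ i, ExteriorAlgebra.ι ℂ (fun k => eval (v i) (p k)) * ExteriorAlgebra.ι ℂ (v i) = 0) →
    ExteriorAlgebra.ι ℂ (fun k => eval u (p k)) * ExteriorAlgebra.ι ℂ u = 0

/-- For a general `s`-tuple of nonzero vectors, every common eigenvector is a multiple of one of
them. -/
def GenericallyNoExtraEigenvector (m s : ℕ) : Prop :=
  ∃ D : MvPolynomial (Fin s × Fin 3) ℂ, D ≠ 0 ∧
    ∀ v : Fin s → Fin 3 → ℂ, (∀ i, v i ≠ 0) → eval (fun t => v t.1 t.2) D ≠ 0 →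
      ∀ u : Fin 3 → ℂ, u ≠ 0 → IsCommonEigenvector m v u → ∃ i, ∃ lam : ℂ, u = lam • v i

theorem MvPolynomial.exists_eval_ne_zero {σ : Type*} {D : MvPolynomial σ ℂ} (hD : D ≠ 0) :
    ∃ x, eval x D ≠ 0 := by
  by_contra! h
  exact hD (MvPolynomial.funext fun x => by simpa using h x)

theorem nonempty_basis_homogeneousSubmodule (m : ℕ) :
    Nonempty (Module.Basis (Fin ((m + 2).choose 2)) ℂ (homogeneousSubmodule (Fin 3) ℂ m)) := by
  have e₁ : {d : Fin 3 →₀ ℕ | d.degree = m} ≃ Sym (Fin 3) m :=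
    ((Sym.equivNatSum (Fin 3) m).trans (Equiv.subtypeEquivRight fun P => by
      simp [Finsupp.sum, Finsupp.degree_apply])).symm
  have hc : Fintype.card (Sym (Fin 3) m) = (m + 2).choose 2 := by
    rw [Sym.card_sym_eq_choose, Fintype.card_fin, show 3 + m - 1 = m + 2 by omega,
      Nat.choose_symm_add]
  rw [homogeneousSubmodule_eq_finsupp_supported]
  exact ⟨(basisRestrictSupport ℂ {d : Fin 3 →₀ ℕ | d.degree = m}).reindex
    (e₁.trans (Fintype.equivFinOfCardEq hc))⟩

theorem exists_unisolvent (m : ℕ) :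
    ∃ x : Fin ((m + 2).choose 2) → Fin 3 → ℂ, Unisolvent m x := by
  obtain ⟨B⟩ := nonempty_basis_homogeneousSubmodule m
  have : Module.Finite ℂ (homogeneousSubmodule (Fin 3) ℂ m) := .of_basis B
  let ev (x : Fin 3 → ℂ) : Module.Dual ℂ (homogeneousSubmodule (Fin 3) ℂ m) :=
    (aeval x).toLinearMap ∘ₗ (homogeneousSubmodule (Fin 3) ℂ m).subtype
  have hev (x f) : ev x f = eval x f.1 := by simp [ev, aeval_eq_eval]
  obtain ⟨κ, a, -, hspan, hli⟩ := exists_linearIndependent' ℂ ev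
  have : Finite κ := hli.finite
  have : Fintype κ := Fintype.ofFinite κ
  have hcard : Fintype.card κ ≤ (m + 2).choose 2 := by
    have := hli.fintype_card_le_finrank
    rwa [Subspace.dual_finrank_eq, Module.finrank_eq_card_basis B, Fintype.card_fin] at this
  obtain ⟨j⟩ : Nonempty (κ ↪ Fin ((m + 2).choose 2)) :=
    Function.Embedding.nonempty_of_card_le (by simpa using hcard)
  refine ⟨Function.extend j a 0, fun f hf h => ?_⟩
  have hker : ∀ g ∈ Submodule.span ℂ (Set.range ev), g ⟨f, hf⟩ = 0 := by
    rw [← hspan]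
    intro g hg
    induction hg using Submodule.span_induction with
    | mem g hg =>
      obtain ⟨i, rfl⟩ := hg
      have := h (j i)
      rw [j.injective.extend_apply] at this
      simpa [hev] using this
    | zero => rfl
    | add g₁ g₂ _ _ h₁ h₂ => simp [h₁, h₂]
    | smul c g _ h₁ => simp [h₁]
  refine MvPolynomial.funext fun x => ?_
  simpa [hev] using hker (ev x) (Submodule.subset_span ⟨x, rfl⟩)

/-- Unisolvence of a subfamily is a nonempty Zariski-open condition. -/
theorem exists_ne_zero_unisolvent (m : ℕ) {s : ℕ} {e : Fin ((m + 2).choose 2) → Fin s}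
    (he : e.Injective) :
    ∃ D : MvPolynomial (Fin s × Fin 3) ℂ, D ≠ 0 ∧ ∀ v : Fin s → Fin 3 → ℂ,
      eval (fun t => v t.1 t.2) D ≠ 0 → Unisolvent m (v ∘ e) := by
  obtain ⟨B⟩ := nonempty_basis_homogeneousSubmodule m
  let A : Matrix (Fin ((m + 2).choose 2)) (Fin ((m + 2).choose 2))
      (MvPolynomial (Fin s × Fin 3) ℂ) :=
    .of fun i j => rename (fun k => (e i, k)) (B j).1
  have hA (v : Fin s → Fin 3 → ℂ) : eval (fun t => v t.1 t.2) A.det =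
      (Matrix.of fun i j => eval (v (e i)) (B j).1).det := by
    rw [RingHom.map_det]
    congr 1
    ext i j
    simp [A, eval_rename, Function.comp_def]
  have hmul (v : Fin s → Fin 3 → ℂ) (a : Fin ((m + 2).choose 2) → ℂ) (i) :
      (Matrix.of fun i j => eval (v (e i)) (B j).1).mulVec a i =
        eval (v (e i)) (∑ j, a j • B j).1 := by
    simp [Matrix.mulVec, dotProduct, smul_eval, mul_comm]
  refine ⟨A.det, fun h0 => ?_, fun v hv f hf h => ?_⟩
  · obtain ⟨x, hx⟩ := exists_unisolvent m
    have := hA (Function.extend e x 0)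
    rw [h0, map_zero, eq_comm, ← Matrix.exists_mulVec_eq_zero_iff] at this
    obtain ⟨a, ha, ha0⟩ := this
    apply ha
    have h1 : (∑ j, a j • B j).1 = 0 := by
      refine hx _ (∑ j, a j • B j).2 fun i => ?_
      have := congrFun ha0 i
      rwa [hmul, he.extend_apply] at this
    have h2 : ∑ j, a j • B j = 0 := Subtype.ext h1
    funext j
    exact Fintype.linearIndependent_iff.1 B.linearIndependent a h2 j
  · by_contra hf0
    rw [hA] at hv
    refine hv (Matrix.exists_mulVec_eq_zero_iff.1 ⟨B.repr ⟨f, hf⟩, fun h0 => hf0 ?_, ?_⟩)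
    · have : B.repr ⟨f, hf⟩ = 0 := DFunLike.coe_injective h0
      exact congrArg Subtype.val (B.repr.map_eq_zero_iff.1 this)
    · funext i
      rw [hmul, B.sum_repr]
      exact h i

theorem Unisolvent.exists_eval_eq {m : ℕ} {x : Fin ((m + 2).choose 2) → Fin 3 → ℂ}
    (hx : Unisolvent m x) (y : Fin ((m + 2).choose 2) → ℂ) :
    ∃ f : MvPolynomial (Fin 3) ℂ, f.IsHomogeneous m ∧ ∀ i, eval (x i) f = y i := by
  obtain ⟨B⟩ := nonempty_basis_homogeneousSubmodule m
  have : Module.Finite ℂ (homogeneousSubmodule (Fin 3) ℂ m) := .of_basis B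
  let ev : homogeneousSubmodule (Fin 3) ℂ m →ₗ[ℂ] (Fin ((m + 2).choose 2) → ℂ) :=
    LinearMap.pi fun i => (aeval (x i)).toLinearMap ∘ₗ (homogeneousSubmodule (Fin 3) ℂ m).subtype
  have hev (f i) : ev f i = eval (x i) f.1 := by simp [ev, aeval_eq_eval]
  have hinj : Function.Injective ev := by
    rw [injective_iff_map_eq_zero]
    exact fun f hf => Subtype.ext (hx f.1 f.2 fun i => by rw [← hev, hf]; rfl)
  have hsurj := (LinearMap.injective_iff_surjective_of_finrank_eq_finrank (f := ev) (by
    simp [Module.finrank_eq_card_basis B])).1 hinj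
  obtain ⟨f, hf⟩ := hsurj y
  exact ⟨f.1, f.2, fun i => by rw [← hev, hf]⟩

theorem Unisolvent.exists_eval_eq_sum {m : ℕ} {x : Fin ((m + 2).choose 2) → Fin 3 → ℂ}
    (hx : Unisolvent m x) (u : Fin 3 → ℂ) :
    ∃ b : Fin ((m + 2).choose 2) → ℂ, ∀ f : MvPolynomial (Fin 3) ℂ, f.IsHomogeneous m →
      eval u f = ∑ i, b i * eval (x i) f := by
  choose g hg hgx using fun i => hx.exists_eval_eq (Pi.single i 1)
  refine ⟨fun i => eval u (g i), fun f hf => ?_⟩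
  have h0 : f - ∑ i, C (eval (x i) f) * g i = 0 := by
    refine hx _ (hf.sub (IsHomogeneous.sum _ _ _ fun i _ => (hg i).C_mul _)) fun j => ?_
    simp [hgx, Pi.single_apply]
  rw [sub_eq_zero.1 h0]
  simp [hgx, Pi.single_apply, mul_comm]

/-- An eigenvector condition, read in coordinates in which the eigenvector is the first basis
vector. -/
theorem apply_eq_zero_of_ι_mul_ι_eq_zero {u w : Fin 3 → ℂ} (e : (Fin 3 → ℂ) →ₗ[ℂ] (Fin 3 → ℂ))
    (he : e u = Pi.single 0 1) {k : Fin 3} (hk : k ≠ 0)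
    (h : ExteriorAlgebra.ι ℂ w * ExteriorAlgebra.ι ℂ u = 0) : e w k = 0 := by
  let L : (Fin 3 → ℂ) →ₗ[ℂ] (Fin 2 → ℂ) :=
    LinearMap.pi ![LinearMap.proj 0 ∘ₗ e, LinearMap.proj k ∘ₗ e]
  let F : ∀ i, (Fin 3 → ℂ) [⋀^Fin i]→ₗ[ℂ] ℂ :=
    Function.update 0 2 ((Matrix.detRowAlternating (n := Fin 2) (R := ℂ)).compLinearMap L)
  have h1 : liftAlternating F (ιMulti ℂ 2 ![w, u]) = 0 := by
    have : ιMulti ℂ 2 ![w, u] = ExteriorAlgebra.ι ℂ w * ExteriorAlgebra.ι ℂ u := by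
      simp [ιMulti_apply]
    rw [this, h, map_zero]
  rw [liftAlternating_apply_ιMulti] at h1
  have h2 : F 2 ![w, u] = Matrix.det (.of ![L w, L u]) := by
    simp only [F, Function.update_self, AlternatingMap.compLinearMap_apply]
    change Matrix.det _ = _
    congr 1
    ext i j
    fin_cases i <;> rfl
  rw [h2, Matrix.det_fin_two] at h1
  simpa [L, he, hk] using h1

theorem exists_linearEquiv_apply_eq_single {u : Fin 3 → ℂ} (hu : u ≠ 0) :
    ∃ e : (Fin 3 → ℂ) ≃ₗ[ℂ] (Fin 3 → ℂ), e u = Pi.single 0 1 := by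
  obtain ⟨A, hA⟩ := SeparatingDual.exists_continuousLinearEquiv_apply_eq (R := ℂ) hu
    (y := (Pi.single 0 1 : Fin 3 → ℂ)) (by simp)
  exact ⟨A.toLinearEquiv, hA⟩

theorem exists_eq_smul_of_apply_eq_zero {u x : Fin 3 → ℂ} (hx : x ≠ 0)
    {e : (Fin 3 → ℂ) ≃ₗ[ℂ] (Fin 3 → ℂ)} (he : e u = Pi.single 0 1)
    (h1 : e x 1 = 0) (h2 : e x 2 = 0) : ∃ lam : ℂ, u = lam • x := by
  have hex : e x = e x 0 • e u := by
    ext k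
    fin_cases k <;> simp [he, h1, h2]
  have h0 : e x 0 ≠ 0 := fun h0 => hx (by simpa [h0] using hex)
  refine ⟨(e x 0)⁻¹, e.injective ?_⟩
  rw [map_smul]
  nth_rw 2 [hex]
  rw [smul_smul, inv_mul_cancel₀ h0, one_smul]

theorem exists_isHomogeneous_eval_ne_zero (m : ℕ) {u : Fin 3 → ℂ} (hu : u ≠ 0) :
    ∃ f : MvPolynomial (Fin 3) ℂ, f.IsHomogeneous m ∧ eval u f ≠ 0 := by
  obtain ⟨k, hk⟩ := Function.ne_iff.1 hu
  exact ⟨X k ^ m, by simpa using (isHomogeneous_X ℂ k).pow m, by simpa using pow_ne_zero m hk⟩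

theorem exists_isHomogeneous_one_eval_eq (ψ : (Fin 3 → ℂ) →ₗ[ℂ] ℂ) :
    ∃ f : MvPolynomial (Fin 3) ℂ, f.IsHomogeneous 1 ∧ ∀ x, eval x f = ψ x := by
  refine ⟨∑ k, C (ψ (Pi.single k 1)) * X k,
    IsHomogeneous.sum _ _ _ fun k _ => (isHomogeneous_X ℂ k).C_mul _, fun x => ?_⟩
  rw [LinearMap.pi_apply_eq_sum_univ ψ x]
  have hs (k : Fin 3) : (fun j => if k = j then (1 : ℂ) else 0) = Pi.single k 1 := by
    ext j
    simp [Pi.single_apply, eq_comm]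
  simp [hs, mul_comm]

/-- If a functional on coefficient vectors vanishes on all linear relations among the `w i`, it
is induced by a functional on the ambient space. -/
theorem exists_functional_of_relations {n : ℕ} (w : Fin n → Fin 3 → ℂ) (a : Fin n → ℂ)
    (h : ∀ lam : Fin n → ℂ, ∑ i, lam i • w i = 0 → ∑ i, lam i * a i = 0) :
    ∃ ψ : (Fin 3 → ℂ) →ₗ[ℂ] ℂ, ∀ i, ψ (w i) = a i := by
  let K := Fintype.linearCombination ℂ w
  let G := Fintype.linearCombination ℂ a
  have hG : G ∈ LinearMap.range K.dualMap := by
    rw [LinearMap.range_dualMap_eq_dualAnnihilator_ker, Submodule.mem_dualAnnihilator]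
    intro lam hlam
    simpa [G, Fintype.linearCombination_apply] using
      h lam (by simpa [K, Fintype.linearCombination_apply] using hlam)
  obtain ⟨ψ, hψ⟩ := hG
  refine ⟨ψ, fun i => ?_⟩
  simpa [K, G] using LinearMap.congr_fun hψ (Pi.single i 1)

/-- Two functionals satisfying the same quadratic relation as two coordinate functionals are
proportional to them. -/
theorem exists_eq_mul_of_mul_eq_mul {e : (Fin 3 → ℂ) ≃ₗ[ℂ] (Fin 3 → ℂ)}
    {ψ₁ ψ₂ : (Fin 3 → ℂ) →ₗ[ℂ] ℂ} (h : ∀ x, ψ₁ x * e x 2 = ψ₂ x * e x 1) :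
    ∃ β : ℂ, ∀ x, ψ₁ x = β * e x 1 ∧ ψ₂ x = β * e x 2 := by
  let b (k : Fin 3) : Fin 3 → ℂ := e.symm (Pi.single k 1)
  have hx (x) : x = e x 0 • b 0 + e x 1 • b 1 + e x 2 • b 2 := by
    apply e.injective
    ext k
    fin_cases k <;> simp [b]
  have h1 := h (b 1)
  have h2 := h (b 2)
  have h12 := h (b 1 + b 2)
  have h01 := h (b 0 + b 1)
  have h02 := h (b 0 + b 2)
  simp [b] at h1 h2 h12 h01 h02
  refine ⟨ψ₁ (b 1), fun x => ?_⟩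
  constructor <;> nth_rw 1 [hx x]
  · simp [b]; grind
  · simp [b]; grind

theorem genericallyNoExtraEigenvector_choose (m : ℕ) :
    GenericallyNoExtraEigenvector m ((m + 2).choose 2) := by
  obtain ⟨D, hD, hDv⟩ := exists_ne_zero_unisolvent m (s := (m + 2).choose 2)
    Function.injective_id
  refine ⟨D, hD, fun v hv hvD u hu hcom => ?_⟩
  have hx : Unisolvent m v := hDv v hvD
  by_contra! hpar
  obtain ⟨e, he⟩ := exists_linearEquiv_apply_eq_single hu
  obtain ⟨b, hb⟩ := hx.exists_eval_eq_sum u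
  obtain ⟨f, hf, hfu⟩ := exists_isHomogeneous_eval_ne_zero m hu
  refine hfu ?_
  rw [hb f hf]
  refine Finset.sum_eq_zero fun i _ => ?_
  suffices b i = 0 by simp [this]
  by_contra hbi
  obtain ⟨g, hg, hgv⟩ := hx.exists_eval_eq (Pi.single i 1)
  have hev (x : Fin 3 → ℂ) : (fun k => eval x (C (v i k) * g)) = eval x g • v i := by
    ext k
    simp [mul_comm]
  have h0 := hcom (fun k => C (v i k) * g) (fun k => hg.C_mul _) fun j => by
    rw [hev, hgv, map_smul]
    rcases eq_or_ne j i with rfl | hji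
    · simp
    · simp [hji]
  rw [hev, hb g hg] at h0
  have hk (k : Fin 3) (hk : k ≠ 0) : e (v i) k = 0 := by
    have := apply_eq_zero_of_ι_mul_ι_eq_zero e.toLinearMap he hk h0
    simpa [hgv, Pi.single_apply, hbi] using this
  obtain ⟨lam, hlam⟩ := exists_eq_smul_of_apply_eq_zero (hv i) he (hk 1 (by simp)) (hk 2 (by simp))
  exact hpar i lam hlam

theorem genericallyNoExtraEigenvector_choose_add_one {m : ℕ} (hm : 2 ≤ m) :
    GenericallyNoExtraEigenvector m ((m + 2).choose 2 + 1) := by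
  have h6 : (2 + 2).choose 2 ≤ (m + 2).choose 2 + 1 :=
    (Nat.choose_le_choose 2 (by omega)).trans (Nat.le_succ _)
  choose D hD hDv using fun i : Fin ((m + 2).choose 2 + 1) =>
    exists_ne_zero_unisolvent m (Fin.succAbove_right_injective (p := i))
  obtain ⟨E, hE, hEv⟩ := exists_ne_zero_unisolvent 2 (Fin.castLE_injective h6)
  refine ⟨(∏ i, D i) * E, mul_ne_zero (Finset.prod_ne_zero_iff.2 fun i _ => hD i) hE,
    fun v hv hvD u hu hcom => ?_⟩
  rw [map_mul, map_prod] at hvD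
  have hx (i : Fin ((m + 2).choose 2 + 1)) : Unisolvent m (v ∘ i.succAbove) :=
    hDv i v (Finset.prod_ne_zero_iff.1 (left_ne_zero_of_mul hvD) i (Finset.mem_univ i))
  have hconic := hEv v (right_ne_zero_of_mul hvD)
  have hx0 : Unisolvent m (fun i => v (Fin.succ i)) := by
    simpa [Function.comp_def] using hx 0
  by_contra! hpar
  obtain ⟨e, he⟩ := exists_linearEquiv_apply_eq_single hu
  obtain ⟨b, hb⟩ := hx0.exists_eval_eq_sum u
  obtain ⟨c, hc⟩ := hx0.exists_eval_eq_sum (v 0)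
  have hc0 (i) : c i ≠ 0 := by
    intro hci
    obtain ⟨g, hg, hgv⟩ := hx0.exists_eval_eq (Pi.single i 1)
    have hg0 : g = 0 := by
      refine hx i.succ g hg fun j => ?_
      rcases Fin.eq_zero_or_eq_succ (i.succ.succAbove j) with hj | ⟨j', hj⟩
      · simp only [Function.comp_apply, hj]
        rw [hc g hg]
        simp [hgv, Pi.single_apply, hci]
      · have hji : j' ≠ i := by
          rintro rfl
          exact Fin.succAbove_ne _ _ hj
        simp [hj, hgv, hji]
    simpa [hg0] using hgv i
  have hψ (k : Fin 3) (hk : k ≠ 0) : ∃ ψ : (Fin 3 → ℂ) →ₗ[ℂ] ℂ, ψ (v 0) = 0 ∧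
      ∀ i : Fin ((m + 2).choose 2), c i * ψ (v i.succ) = b i * e (v i.succ) k := by
    obtain ⟨ψ, hψ⟩ := exists_functional_of_relations (n := (m + 2).choose 2 + 1)
      (Fin.cons (v 0) fun i => c i • v i.succ) (Fin.cons 0 fun i => b i * e (v i.succ) k) (by
        intro lam hlam
        simp only [Fin.sum_univ_succ, Fin.cons_zero, Fin.cons_succ, mul_zero, zero_add] at hlam ⊢
        choose p hp hpv using fun l : Fin 3 =>
          hx0.exists_eval_eq (fun i => lam i.succ * v i.succ l)
        have hsucc (i : Fin ((m + 2).choose 2)) :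
            (fun l => eval (v i.succ) (p l)) = lam i.succ • v i.succ := by
          ext l
          simp [hpv]
        have hzero : (fun l => eval (v 0) (p l)) = (-lam 0) • v 0 := by
          rw [neg_smul, eq_neg_of_add_eq_zero_left hlam, neg_neg]
          ext l
          rw [hc _ (hp l)]
          simp [hpv, mul_left_comm]
        have h0 := hcom p hp fun i => by
          cases i using Fin.cases with
          | zero => simp [hzero]
          | succ i => simp [hsucc]
        have hu' : (fun l => eval u (p l)) = ∑ i, (lam i.succ * b i) • v i.succ := by
          ext l
          rw [hb _ (hp l)]
          simp [hpv, mul_left_comm, mul_assoc]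
        rw [hu'] at h0
        have := apply_eq_zero_of_ι_mul_ι_eq_zero e.toLinearMap he hk h0
        simpa [mul_assoc] using this)
    exact ⟨ψ, by simpa using hψ 0, fun i => by simpa using hψ i.succ⟩
  obtain ⟨ψ₁, h10, h1⟩ := hψ 1 (by simp)
  obtain ⟨ψ₂, h20, h2⟩ := hψ 2 (by simp)
  have hrel (x) : ψ₁ x * e x 2 = ψ₂ x * e x 1 := by
    obtain ⟨f₁, hf₁, hf₁x⟩ := exists_isHomogeneous_one_eval_eq ψ₁
    obtain ⟨f₂, hf₂, hf₂x⟩ := exists_isHomogeneous_one_eval_eq ψ₂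
    obtain ⟨g₁, hg₁, hg₁x⟩ := exists_isHomogeneous_one_eval_eq (LinearMap.proj 1 ∘ₗ e.toLinearMap)
    obtain ⟨g₂, hg₂, hg₂x⟩ := exists_isHomogeneous_one_eval_eq (LinearMap.proj 2 ∘ₗ e.toLinearMap)
    have hv0 (i) : ψ₁ (v i) * e (v i) 2 = ψ₂ (v i) * e (v i) 1 := by
      cases i using Fin.cases with
      | zero => simp [h10, h20]
      | succ i =>
        apply mul_left_cancel₀ (hc0 i)
        linear_combination e (v i.succ) 2 * h1 i - e (v i.succ) 1 * h2 i
    have hq : f₁ * g₂ - f₂ * g₁ = 0 :=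
      hconic _ ((hf₁.mul hg₂).sub (hf₂.mul hg₁)) fun i => by
        simpa [hf₁x, hf₂x, hg₁x, hg₂x, sub_eq_zero] using hv0 _
    have := congrArg (eval x) hq
    simpa [hf₁x, hf₂x, hg₁x, hg₂x, sub_eq_zero] using this
  obtain ⟨β, hβ⟩ := exists_eq_mul_of_mul_eq_mul hrel
  have hne (i) : ¬ (e (v i) 1 = 0 ∧ e (v i) 2 = 0) := fun h => by
    obtain ⟨lam, hlam⟩ := exists_eq_smul_of_apply_eq_zero (hv i) he h.1 h.2
    exact hpar i lam hlam
  have hβ0 : β = 0 := by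
    by_contra h
    refine hne 0 ⟨?_, ?_⟩
    · simpa [h10, h] using (hβ (v 0)).1.symm
    · simpa [h20, h] using (hβ (v 0)).2.symm
  have hb0 (i) : b i = 0 := by
    by_contra h
    refine hne i.succ ⟨?_, ?_⟩
    · simpa [(hβ _).1, hβ0, h] using (h1 i).symm
    · simpa [(hβ _).2, hβ0, h] using (h2 i).symm
  obtain ⟨f, hf, hfu⟩ := exists_isHomogeneous_eval_ne_zero m hu
  exact hfu (by simp [hb f hf, hb0])

theorem GenericallyNoExtraEigenvector.of_succ {m s : ℕ}
    (h : GenericallyNoExtraEigenvector m (s + 1)) : GenericallyNoExtraEigenvector m s := by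
  obtain ⟨D, hD, hDv⟩ := h
  obtain ⟨w, hw⟩ := exists_eval_ne_zero hD
  let P : MvPolynomial (Fin s × Fin 3) ℂ := aeval (fun t : Fin (s + 1) × Fin 3 =>
    (Fin.snoc (α := fun _ => Fin 3 → MvPolynomial (Fin s × Fin 3) ℂ)
      (fun i k => X (i, k)) (fun k => C (w (Fin.last s, k))) t.1 t.2)) D
  have hP (v : Fin s → Fin 3 → ℂ) : eval (fun t => v t.1 t.2) P =
      eval (fun t => Fin.snoc (α := fun _ => Fin 3 → ℂ) v (fun k => w (Fin.last s, k)) t.1 t.2)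
        D := by
    rw [← aeval_eq_eval, ← aeval_eq_eval]
    simp only [P, comp_aeval_apply]
    congr 2
    ext ⟨i, k⟩
    cases i using Fin.lastCases <;> simp
  refine ⟨P, fun h0 => hw ?_, fun v hv hvP u hu hcom => ?_⟩
  · have := hP fun i k => w (i.castSucc, k)
    rw [h0, map_zero] at this
    rw [this]
    congr 2
    ext ⟨i, k⟩
    cases i using Fin.lastCases <;> simp
  let Q : MvPolynomial (Fin 3) ℂ := aeval (fun t : Fin (s + 1) × Fin 3 =>
    (Fin.snoc (α := fun _ => Fin 3 → MvPolynomial (Fin 3) ℂ)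
      (fun i k => C (v i k)) X t.1 t.2)) D
  have hQ (y : Fin 3 → ℂ) : eval y Q =
      eval (fun t => Fin.snoc (α := fun _ => Fin 3 → ℂ) v y t.1 t.2) D := by
    rw [← aeval_eq_eval, ← aeval_eq_eval]
    simp only [Q, comp_aeval_apply]
    congr 2
    ext ⟨i, k⟩
    cases i using Fin.lastCases <;> simp
  have hQ0 : Q ≠ 0 := fun h0 => hvP (by rw [hP, ← hQ, h0, map_zero])
  obtain ⟨k, hk⟩ := Function.ne_iff.1 hu
  obtain ⟨l, hl⟩ := exists_ne k
  let R : MvPolynomial (Fin 3) ℂ := C (u k) * X l - C (u l) * X k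
  have hR (y : Fin 3 → ℂ) : eval y R = u k * y l - u l * y k := by simp [R]
  have hR0 : R ≠ 0 := fun h0 => hk (by simpa [h0, hl.symm] using (hR (Pi.single l 1)).symm)
  obtain ⟨y, hy⟩ := exists_eval_ne_zero (mul_ne_zero hQ0 hR0)
  rw [map_mul, hQ, hR] at hy
  have hy1 := right_ne_zero_of_mul hy
  obtain ⟨i, lam, hi⟩ := hDv (Fin.snoc (α := fun _ => Fin 3 → ℂ) v y) (fun i => by
      cases i using Fin.lastCases with
      | last =>
        rw [Fin.snoc_last]
        rintro rfl
        simp at hy1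
      | cast i => simpa using hv i) (left_ne_zero_of_mul hy) u hu fun p hp hpv =>
    hcom p hp fun i => by simpa using hpv i.castSucc
  cases i using Fin.lastCases with
  | last =>
    rw [Fin.snoc_last] at hi
    refine absurd ?_ hy1
    simp only [hi, Pi.smul_apply, smul_eq_mul]
    ring
  | cast i => exact ⟨i, lam, by simpa using hi⟩

theorem GenericallyNoExtraEigenvector.mono {m s t : ℕ} (hst : s ≤ t)
    (h : GenericallyNoExtraEigenvector m t) : GenericallyNoExtraEigenvector m s := by
  induction t, hst using Nat.le_induction with
  | base => exact h
  | succ t _ ih => exact ih h.of_succ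

theorem MvPolynomial.IsHomogeneous.eval_smul_eq {σ : Type*} {f : MvPolynomial σ ℂ} {m : ℕ}
    (hf : f.IsHomogeneous m) (c : ℂ) (x : σ → ℂ) : eval (c • x) f = c ^ m * eval x f := by
  rw [eval_eq, eval_eq, Finset.mul_sum]
  refine Finset.sum_congr rfl fun d hd => ?_
  have hdeg : ∑ i ∈ d.support, d i = m := by
    rw [← Finsupp.degree_apply, Finsupp.degree_eq_weight_one]
    exact hf (mem_support_iff.1 hd)
  simp only [Pi.smul_apply, smul_eq_mul, mul_pow, Finset.prod_mul_distrib,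
    Finset.prod_pow_eq_pow_sum, hdeg]
  ring

theorem isCommonEigenvector_smul {ι : Type*} (m : ℕ) (v : ι → Fin 3 → ℂ) (i : ι) (lam : ℂ) :
    IsCommonEigenvector m v (lam • v i) := by
  intro p hp hpv
  have : (fun k => eval (lam • v i) (p k)) = lam ^ m • fun k => eval (v i) (p k) := by
    ext k
    exact (hp k).eval_smul_eq _ _
  rw [this, map_smul, map_smul, smul_mul_smul_comm, hpv i, smul_zero]

/-- Theorem 5.1(ii) for `ℙ²`: if `m ≥ 2` and `2s ≤ m² + 3m + 4` (or `m = 1` and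
`s ≤ 3`), then for a general tuple of nonzero vectors `v_1,…,v_s ∈ ℂ³`, the common
eigenvectors of all tensors `M ∈ Hom(S^mℂ³, ℂ³)` (represented by three homogeneous
degree-`m` component polynomials) having every `v_i` as an eigenvector are exactly the
nonzero scalar multiples of the `v_i`. -/
theorem statement12 (m s : ℕ)
    (hms : (2 ≤ m ∧ 2 * s ≤ m ^ 2 + 3 * m + 4) ∨ (m = 1 ∧ s ≤ 3)) :
    ∃ D : MvPolynomial (Fin s × Fin 3) ℂ, D ≠ 0 ∧
      ∀ v : Fin s → Fin 3 → ℂ, (∀ i, v i ≠ 0) →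
        MvPolynomial.eval (fun t => v t.1 t.2) D ≠ 0 →
        ∀ u : Fin 3 → ℂ, u ≠ 0 →
          ((∀ p : Fin 3 → MvPolynomial (Fin 3) ℂ,
              (∀ k, (p k).IsHomogeneous m) →
              (∀ i, ExteriorAlgebra.ι ℂ (fun k => MvPolynomial.eval (v i) (p k)) *
                  ExteriorAlgebra.ι ℂ (v i) = 0) →
              ExteriorAlgebra.ι ℂ (fun k => MvPolynomial.eval u (p k)) *
                ExteriorAlgebra.ι ℂ u = 0) ↔
            ∃ i, ∃ lam : ℂ, u = lam • v i) := by
  have hgen : GenericallyNoExtraEigenvector m s := by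
    rcases hms with ⟨hm, hs⟩ | ⟨rfl, hs⟩
    · refine (genericallyNoExtraEigenvector_choose_add_one hm).mono ?_
      have h2 : (m + 2).choose 2 * 2 = (m + 2) * (m + 1) := by
        rw [Nat.choose_two_right, Nat.div_mul_cancel (Nat.even_mul_pred_self _).two_dvd]
        rfl
      nlinarith
    · exact (genericallyNoExtraEigenvector_choose 1).mono hs
  obtain ⟨D, hD, hDv⟩ := hgen
  refine ⟨D, hD, fun v hv hvD u hu => ⟨hDv v hv hvD u hu, ?_⟩⟩
  rintro ⟨i, lam, rfl⟩
  exact isCommonEigenvector_smul m v i lam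
end
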